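/- For each n ≥ 1 and m = n + 2 there exists a uniquely optimal graph in G_{n,m}. This graph is a balanced weak subdivision of K₄, specified up to isomorphism by the following additional conditions, where m ≡ r (mod 6) with r ∈ {−2, −1, 0, 1, 2, 3}: if r ∈ {0, 1, −1}, no further condition is needed; if r = 2 (respectively r = −2), the two chains that are one edge longer (respectively shorter) than the others correspond to two non-adjacent edges of K₄; if r = 3, the three longer chains correspond to a path with three edges in K₄. -/

import Mathlib

open Classical Finset

noncomputable section

/-- A finite multigraph: edges carry two (possibly equal) endpoints. -/
structure Multigraph where
  V : Type
  E : Type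
  [fintV : Fintype V]
  [fintE : Fintype E]
  src : E → V
  tgt : E → V

attribute [instance] Multigraph.fintV Multigraph.fintE

namespace Multigraph

variable (G : Multigraph)

/-- Number of vertices. -/
def nV : ℕ := Fintype.card G.V

/-- Number of edges (with multiplicity). -/
def nE : ℕ := Fintype.card G.E

/-- One step along an edge belonging to the edge set `S`. -/
def stepOn (S : Finset G.E) (u v : G.V) : Prop :=
  ∃ e ∈ S, (G.src e = u ∧ G.tgt e = v) ∨ (G.src e = v ∧ G.tgt e = u)

/-- The spanning subgraph with edge set `S` is connected. -/
def ConnOn (S : Finset G.E) : Prop :=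
  ∀ u v : G.V, Relation.ReflTransGen (G.stepOn S) u v

/-- `G` is connected. -/
def Connected : Prop := G.ConnOn Finset.univ

/-- The edge set `F` disconnects `G` (i.e. is a disconnection). -/
def Disconnects (F : Finset G.E) : Prop := ¬ G.ConnOn (Finset.univ \ F)

/-- `d i G`: the number of `i`-disconnections of `G`. -/
def d (i : ℕ) : ℕ :=
  ((Finset.univ : Finset (Finset G.E)).filter fun F => F.card = i ∧ G.Disconnects F).card

/-- The all-terminal reliability `R(G,p)`: each edge is independently retained with
probability `p`; this is the probability that the retained spanning subgraph is connected. -/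
def rel (p : ℝ) : ℝ :=
  ∑ S : Finset G.E, if G.ConnOn S then p ^ S.card * (1 - p) ^ (G.nE - S.card) else 0

/-- `e` is a bridge. -/
def IsBridge (e : G.E) : Prop := G.Disconnects {e}

def Bridgeless : Prop := ∀ e : G.E, ¬ G.IsBridge e

/-- The number of spanning trees of `G` (connected spanning subgraphs with `nV - 1` edges). -/
def treeCount : ℕ :=
  ((Finset.univ : Finset (Finset G.E)).filter fun S => S.card + 1 = G.nV ∧ G.ConnOn S).card

/-- The edge-connectivity: the least size of a disconnecting set of edges. -/
def edgeConnectivity : ℕ :=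
  sInf {i : ℕ | ∃ F : Finset G.E, F.card = i ∧ G.Disconnects F}

/-- Degree of a vertex (a loop counts twice). -/
def deg (v : G.V) : ℕ :=
  (Finset.univ.filter fun e => G.src e = v).card +
    (Finset.univ.filter fun e => G.tgt e = v).card

/-- The edges crossing the vertex set `A`. -/
def cutEdges (A : Finset G.V) : Finset G.E :=
  Finset.univ.filter fun e =>
    (G.src e ∈ A ∧ G.tgt e ∉ A) ∨ (G.src e ∉ A ∧ G.tgt e ∈ A)

/-- `F` is a cut: the set of edges crossing a nontrivial bipartition of the vertices. -/
def IsCut (F : Finset G.E) : Prop :=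
  ∃ A : Finset G.V, A.Nonempty ∧ A ≠ Finset.univ ∧ F = G.cutEdges A

/-- `F` is a bond: a minimal cut. -/
def IsBond (F : Finset G.E) : Prop :=
  G.IsCut F ∧ ∀ F' ⊆ F, G.IsCut F' → F' = F

/-- Number of `s`-bonds of `G`. -/
def bondCount (s : ℕ) : ℕ :=
  ((Finset.univ : Finset (Finset G.E)).filter fun F => F.card = s ∧ G.IsBond F).card

/-- Adjacency of vertices. -/
def Adj (u v : G.V) : Prop :=
  ∃ e : G.E, (G.src e = u ∧ G.tgt e = v) ∨ (G.src e = v ∧ G.tgt e = u)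

/-- `G` is simple: no loops and no parallel edges. -/
def IsSimple : Prop :=
  (∀ e : G.E, G.src e ≠ G.tgt e) ∧
    ∀ e f : G.E,
      ((G.src e = G.src f ∧ G.tgt e = G.tgt f) ∨ (G.src e = G.tgt f ∧ G.tgt e = G.src f)) →
        e = f

end Multigraph

/-- `G ∈ 𝒢_{n,m}`: connected with `n` vertices and `m` edges. -/
def memG (G : Multigraph) (n m : ℕ) : Prop :=
  G.nV = n ∧ G.nE = m ∧ G.Connected

/-- Isomorphism of multigraphs. -/
structure MGIso (G H : Multigraph) where
  vMap : G.V ≃ H.V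
  eMap : G.E ≃ H.E
  ends_eq : ∀ e : G.E,
    (H.src (eMap e) = vMap (G.src e) ∧ H.tgt (eMap e) = vMap (G.tgt e)) ∨
    (H.src (eMap e) = vMap (G.tgt e) ∧ H.tgt (eMap e) = vMap (G.src e))

def IsIso (G H : Multigraph) : Prop := Nonempty (MGIso G H)

/-- `G` is `p`-optimal in `𝒢_{n,m}`. -/
def pOptimal (G : Multigraph) (n m : ℕ) (p : ℝ) : Prop :=
  memG G n m ∧ ∀ H : Multigraph, memG H n m → H.rel p ≤ G.rel p

/-- `G` is uniquely optimal in `𝒢_{n,m}`: strictly more reliable than every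
non-isomorphic member, for every `p ∈ (0,1)`. -/
def UniquelyOptimal (G : Multigraph) (n m : ℕ) : Prop :=
  memG G n m ∧ ∀ H : Multigraph, memG H n m → ¬ IsIso G H →
    ∀ p : ℝ, 0 < p → p < 1 → H.rel p < G.rel p

noncomputable instance quotFintype {α : Type} [Fintype α] {r : α → α → Prop} :
    Fintype (Quot r) :=
  letI := Classical.decEq (Quot r)
  Fintype.ofSurjective (Quot.mk r) fun q => Quot.exists_rep q

/-- Identification of the endpoints of zero-weight edges. -/
def zeroRel (D : Multigraph) (w : D.E → ℕ) : D.V → D.V → Prop :=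
  fun u v => ∃ e : D.E, w e = 0 ∧ D.src e = u ∧ D.tgt e = v

/-- The `j`-th node along the chain replacing the edge `e` (whose chain has `w e` edges). -/
def chainNode (D : Multigraph) (w : D.E → ℕ) (e : D.E) (j : ℕ) :
    Quot (zeroRel D w) ⊕ (Σ f : D.E, Fin (w f - 1)) :=
  if h : 0 < j ∧ j < w e then Sum.inr ⟨e, ⟨j - 1, by omega⟩⟩
  else if j = 0 then Sum.inl (Quot.mk _ (D.src e))
  else Sum.inl (Quot.mk _ (D.tgt e))

/-- The weak subdivision of `D` determined by the chain lengths `w`: each edge `e` is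
replaced by a chain with `w e` edges; zero-weight edges are contracted. -/
def subdivide (D : Multigraph) (w : D.E → ℕ) : Multigraph where
  V := Quot (zeroRel D w) ⊕ (Σ f : D.E, Fin (w f - 1))
  E := Σ f : D.E, Fin (w f)
  src f := chainNode D w f.1 f.2.val
  tgt f := chainNode D w f.1 (f.2.val + 1)

/-- The zero-weight edges contain no cycle (no "zero cycle"): they form a forest. -/
def ZeroAcyclic (D : Multigraph) (w : D.E → ℕ) : Prop :=
  Fintype.card (Quot (zeroRel D w)) +
      (Finset.univ.filter fun e : D.E => w e = 0).card = Fintype.card D.V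

/-- `G` is a weak subdivision of `D` with chain lengths `w`. -/
def IsWeakSubdivision (G D : Multigraph) (w : D.E → ℕ) : Prop :=
  ZeroAcyclic D w ∧ IsIso G (subdivide D w)

/-- `D` is a weak distillation of `G`. -/
def IsWeakDistillation (D G : Multigraph) : Prop :=
  ∃ w : D.E → ℕ, IsWeakSubdivision G D w

/-- The chain lengths differ pairwise by at most one. -/
def BalancedWeights {E : Type} (w : E → ℕ) : Prop := ∀ e f : E, w e ≤ w f + 1

/-- `D ∈ 𝒟_k`: connected, cubic, 3-edge-connected, of exceedance `k`. -/
def memDk (k : ℕ) (D : Multigraph) : Prop :=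
  D.Connected ∧ (∀ v : D.V, D.deg v = 3) ∧
    (∀ F : Finset D.E, D.Disconnects F → 3 ≤ F.card) ∧ D.nE = D.nV + k

/-- Identification of the two endpoints of the edge `e`. -/
def contractRel (G : Multigraph) (e : G.E) : G.V → G.V → Prop :=
  fun u v => u = G.src e ∧ v = G.tgt e

/-- Contraction of the edge `e`. -/
def Multigraph.contract (G : Multigraph) (e : G.E) : Multigraph :=
  letI := Classical.decEq G.E
  { V := Quot (contractRel G e)
    E := {f : G.E // f ≠ e}
    src := fun f => Quot.mk _ (G.src f.1)
    tgt := fun f => Quot.mk _ (G.tgt f.1) }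

/-- `G'` is obtained from `G` by shifting an edge: in an intermediate graph `H`
(the expansion of `G` at a vertex by the new edge `e'`), the edges `e, e'` form a
2-bond; contracting `e'` gives back `G`, while contracting `e` gives `G'`. -/
def IsShiftOf (G G' : Multigraph) : Prop :=
  ∃ (H : Multigraph) (e e' : H.E), e ≠ e' ∧
    H.src e ≠ H.tgt e ∧ H.src e' ≠ H.tgt e' ∧
    H.IsBond {e, e'} ∧
    IsIso (H.contract e') G ∧ IsIso (H.contract e) G'

/-- Equivalence of graphs: repeated edge shifting. -/
def EquivalentGraphs (G G' : Multigraph) : Prop :=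
  Relation.ReflTransGen IsShiftOf G G'

/-- `G'` is obtained from `G` by moving the (non-loop) edge `e`: contracting `e` and
expanding a new edge, identified with `e` via `φ`, at an arbitrary vertex.
Equivalently, `G/e` and `G'/φ e` agree, compatibly with the edge identification `φ`. -/
def MovedEdge (G G' : Multigraph) (φ : G.E ≃ G'.E) (e : G.E) : Prop :=
  G.src e ≠ G.tgt e ∧ G'.src (φ e) ≠ G'.tgt (φ e) ∧
  ∃ ψ : Quot (contractRel G e) ≃ Quot (contractRel G' (φ e)),
    ∀ f : G.E, f ≠ e →
      ((ψ (Quot.mk _ (G.src f)) = Quot.mk _ (G'.src (φ f)) ∧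
        ψ (Quot.mk _ (G.tgt f)) = Quot.mk _ (G'.tgt (φ f))) ∨
       (ψ (Quot.mk _ (G.src f)) = Quot.mk _ (G'.tgt (φ f)) ∧
        ψ (Quot.mk _ (G.tgt f)) = Quot.mk _ (G'.src (φ f))))

/-- Move one edge from the chain `a` to the chain `b`. -/
def moveWeight {E : Type} (w : E → ℕ) (a b : E) : E → ℕ :=
  fun g => if g = b then w b + 1 else if g = a then w a - 1 else w g

/-- The chains of maximal length. -/
def maxChains (D : Multigraph) (w : D.E → ℕ) : Finset D.E :=
  Finset.univ.filter fun e => ∀ f : D.E, w f ≤ w e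

/-- The chains of minimal length. -/
def minChains (D : Multigraph) (w : D.E → ℕ) : Finset D.E :=
  Finset.univ.filter fun e => ∀ f : D.E, w e ≤ w f

/-- Degree of `v` within the edge set `S`. -/
def degIn (D : Multigraph) (S : Finset D.E) (v : D.V) : ℕ :=
  (S.filter fun e => D.src e = v).card + (S.filter fun e => D.tgt e = v).card

/-- `S` is a matching (pairwise non-adjacent edges). -/
def IsMatchingIn (D : Multigraph) (S : Finset D.E) : Prop := ∀ v : D.V, degIn D S v ≤ 1

/-- `S` is a path with three edges. -/
def IsPath3In (D : Multigraph) (S : Finset D.E) : Prop :=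
  S.card = 3 ∧ (∀ v : D.V, degIn D S v ≤ 2) ∧
    (Finset.univ.filter fun v : D.V => degIn D S v = 1).card = 2

/-- `S` is the disjoint union of a path with three edges and a single edge. -/
def IsPath3PlusEdgeIn (D : Multigraph) (S : Finset D.E) : Prop :=
  S.card = 4 ∧ (∀ v : D.V, degIn D S v ≤ 2) ∧
    (Finset.univ.filter fun v : D.V => degIn D S v = 1).card = 4 ∧
    ∃ e ∈ S, degIn D S (D.src e) = 2 ∧ degIn D S (D.tgt e) = 2

/-- `S` is the disjoint union of two paths with two edges each. -/
def IsTwoPlusTwoIn (D : Multigraph) (S : Finset D.E) : Prop :=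
  S.card = 4 ∧ (∀ v : D.V, degIn D S v ≤ 2) ∧
    (Finset.univ.filter fun v : D.V => degIn D S v = 1).card = 4 ∧
    ∀ e ∈ S, degIn D S (D.src e) = 1 ∨ degIn D S (D.tgt e) = 1

/-- Two edges sharing a vertex. -/
def AdjEdges (D : Multigraph) (a b : D.E) : Prop :=
  ∃ v : D.V, (D.src a = v ∨ D.tgt a = v) ∧ (D.src b = v ∨ D.tgt b = v)

/-- The number of incidences of edges of weight `c` at the vertex `u`. -/
def incCount (D : Multigraph) (w : D.E → ℕ) (u : D.V) (c : ℕ) : ℕ :=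
  (Finset.univ.filter fun e : D.E => D.src e = u ∧ w e = c).card +
    (Finset.univ.filter fun e : D.E => D.tgt e = u ∧ w e = c).card

/-- The `π^v`-value of the vertex `u`: the number of incident edges of weight `q + 1`
minus the number of incident edges of weight `q - 1`. -/
def piV (D : Multigraph) (w : D.E → ℕ) (q : ℕ) (u : D.V) : ℤ :=
  (incCount D w u (q + 1) : ℤ) -
    (if q = 0 then 0 else (incCount D w u (q - 1) : ℤ))

/-- The `π^v`-values are balanced: pairwise differences at most one. -/
def BalancedPiV (D : Multigraph) (w : D.E → ℕ) (q : ℕ) : Prop :=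
  ∀ u v : D.V, piV D w q u ≤ piV D w q v + 1

/-- The standard weight `q`, where `m = 3kq + r` with `-3k/2 < r ≤ 3k/2`. -/
def stdWeight (m k : ℕ) : ℕ := (2 * m + 3 * k - 1) / (6 * k)

/-- `w` is a balanced weighting of `D` of total size `m` (the implied weak
subdivision is the generic member of `ℬ_m(D)`). -/
def IsBalancedWeighting (D : Multigraph) (w : D.E → ℕ) (m : ℕ) : Prop :=
  (∑ e : D.E, w e) = m ∧ BalancedWeights w ∧ ZeroAcyclic D w

/-- Every 3-bond of `D` is trivial (consists of the three edges at a single vertex). -/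
def OnlyTrivialThreeBonds (D : Multigraph) : Prop :=
  ∀ F : Finset D.E, D.IsBond F → F.card = 3 →
    ∃ u : D.V, F = Finset.univ.filter fun e => D.src e = u ∨ D.tgt e = u

/-- The 3-dipole: two vertices joined by three parallel edges. -/
def dipole3 : Multigraph where
  V := Fin 2
  E := Fin 3
  src _ := 0
  tgt _ := 1

/-- The complete graph `K₄`. -/
def K4 : Multigraph where
  V := Fin 4
  E := {p : Fin 4 × Fin 4 // p.1 < p.2}
  src p := p.1.1
  tgt p := p.1.2

/-- The complete bipartite graph `K_{3,3}`. -/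
def K33 : Multigraph where
  V := Fin 3 ⊕ Fin 3
  E := Fin 3 × Fin 3
  src p := Sum.inl p.1
  tgt p := Sum.inr p.2

/-- The triangular prism `Π₃`; the edges `Sum.inr i` are the rungs. -/
def prism : Multigraph where
  V := Fin 3 × Bool
  E := (Fin 3 × Bool) ⊕ Fin 3
  src := fun e => match e with
    | Sum.inl (i, b) => (i, b)
    | Sum.inr i => (i, false)
  tgt := fun e => match e with
    | Sum.inl (i, b) => (i + 1, b)
    | Sum.inr i => (i, true)

/-- The Wagner graph (the 4-Möbius ladder): the edges `Sum.inl i` are the rails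
(the 8-cycle) and the edges `Sum.inr j` are the rungs. -/
def wagner : Multigraph where
  V := Fin 8
  E := Fin 8 ⊕ Fin 4
  src := fun e => match e with
    | Sum.inl i => i
    | Sum.inr j => ⟨j.val, by omega⟩
  tgt := fun e => match e with
    | Sum.inl i => i + 1
    | Sum.inr j => ⟨j.val + 4, by omega⟩

/-- The Petersen graph. -/
def petersen : Multigraph where
  V := Fin 5 × Bool
  E := Fin 5 ⊕ Fin 5 ⊕ Fin 5
  src := fun e => match e with
    | Sum.inl i => (i, false)
    | Sum.inr (Sum.inl i) => (i, false)
    | Sum.inr (Sum.inr i) => (i, true)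
  tgt := fun e => match e with
    | Sum.inl i => (i + 1, false)
    | Sum.inr (Sum.inl i) => (i, true)
    | Sum.inr (Sum.inr i) => (i + 2, true)

/-- The extra conditions (depending on m mod 6) specifying the optimal balanced weak
K₄-subdivision: for r = 2 the two longer chains form a matching; for r = −2 (i.e.
m % 6 = 4) the two shorter chains form a matching; for r = 3 the three longer chains
form a path with three edges. -/
def k4Cond (m : ℕ) (w : K4.E → ℕ) : Prop :=
  (m % 6 = 2 → IsMatchingIn K4 (maxChains K4 w)) ∧
  (m % 6 = 4 → IsMatchingIn K4 (minChains K4 w)) ∧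
  (m % 6 = 3 → IsPath3In K4 (maxChains K4 w))


/-- the number of bases polynomial -/
def Pf (a a' b b' c c' : ℕ) : ℕ :=
  a*a'*(b+b'+c+c') + b*b'*(a+a'+c+c') + c*c'*(a+a'+b+b') + (a*b*c' + a*b'*c + a'*b*c + a'*b'*c')

def Lc : ℕ → ℕ
  | 2 => 4 | 3 => 10 | 4 => 20 | 5 => 32 | _ => 0
def Cc : ℕ → ℕ
  | 3 => 1 | 4 => 4 | 5 => 8 | _ => 0
def Pstar (q r : ℕ) : ℕ := 16*q^3 + 8*r*q^2 + q * Lc r + Cc r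

theorem Q1 (A B C α β γ : ℤ) (ha : |α| ≤ A) (hb : |β| ≤ B) (hc : |γ| ≤ C) :
    α^2*(B+C) ≤ α^2*(B+C) + β^2*(A+C) + γ^2*(A+B) + 2*α*β*γ := by
  have h1 : -(2 * (|α| * |β| * |γ|)) ≤ 2*α*β*γ := by
    have := neg_abs_le (α*β*γ)
    rw [abs_mul, abs_mul] at this; linarith
  have e1 : β^2 = |β|^2 := (sq_abs _).symm
  have e2 : γ^2 = |γ|^2 := (sq_abs _).symm
  rw [e1, e2]
  have p1 := abs_nonneg α
  have p2 := abs_nonneg β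
  have p3 := abs_nonneg γ
  generalize |α| = a at *
  generalize |β| = b at *
  generalize |γ| = c at *
  nlinarith [mul_nonneg (sq_nonneg b) (sub_nonneg.2 ha), mul_nonneg (sq_nonneg c) (sub_nonneg.2 ha),
    mul_nonneg (sq_nonneg b) (sub_nonneg.2 hc), mul_nonneg (sq_nonneg c) (sub_nonneg.2 hb),
    mul_nonneg p1 (sq_nonneg (b-c)), mul_nonneg (sq_nonneg b) p3, mul_nonneg (sq_nonneg c) p2]

theorem Q2 (A B C α β γ : ℤ) (ha : |α| ≤ A) (hb : |β| ≤ B) (hc : |γ| ≤ C) (h2 : 2 ∣ α)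
    (hβ : β ≠ 0) (hγ : γ ≠ 0) :
    (A+C) + (A+B) ≤ α^2*(B+C) + β^2*(A+C) + γ^2*(A+B) + 2*α*β*γ := by
  have h1 : -(2 * (|α| * |β| * |γ|)) ≤ 2*α*β*γ := by
    have := neg_abs_le (α*β*γ)
    rw [abs_mul, abs_mul] at this; linarith
  have e1 : β^2 = |β|^2 := (sq_abs _).symm
  have e2 : γ^2 = |γ|^2 := (sq_abs _).symm
  have e3 : α^2 = |α|^2 := (sq_abs _).symm
  have d : 2 ∣ |α| := (dvd_abs _ _).2 h2
  rw [e1, e2, e3]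
  have p1 := abs_nonneg α
  have p2 := abs_pos.2 hβ
  have p3 := abs_pos.2 hγ
  generalize |α| = a at *
  generalize |β| = b at *
  generalize |γ| = c at *
  have hb1 : 0 ≤ b^2 - 1 := by nlinarith
  have hc1 : 0 ≤ c^2 - 1 := by nlinarith
  have m1 : 0 ≤ (b^2-1)*(A - a + (C - c)) := mul_nonneg hb1 (by linarith)
  have m2 : 0 ≤ (c^2-1)*(A - a + (B - b)) := mul_nonneg hc1 (by linarith)
  have m3 : 0 ≤ a^2*(B - b + (C - c)) := mul_nonneg (sq_nonneg a) (by linarith)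
  have m4 : 0 ≤ a*(b-c)^2 := mul_nonneg p1 (sq_nonneg _)
  have m5 : 0 ≤ (b^2-1)*c := mul_nonneg hb1 p3.le
  have m6 : 0 ≤ (c^2-1)*b := mul_nonneg hc1 p2.le
  have m7 : 2*a ≤ a^2*(b+c) := by
    obtain ⟨k, rfl⟩ := d
    have : 0 ≤ k := by omega
    have : 0 ≤ k^2*(b+c-2) := mul_nonneg (sq_nonneg _) (by omega)
    nlinarith
  nlinarith

theorem Q3 (A B C α β γ : ℤ) (ha : |α| ≤ A) (hb : |β| ≤ B) (hc : |γ| ≤ C) (hα : α ≠ 0)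
    (hβ : β ≠ 0) (hγ : γ ≠ 0) :
    (B+C) + (A+C) + (A+B) - 2 ≤ α^2*(B+C) + β^2*(A+C) + γ^2*(A+B) + 2*α*β*γ := by
  have h1 : -(2 * (|α| * |β| * |γ|)) ≤ 2*α*β*γ := by
    have := neg_abs_le (α*β*γ)
    rw [abs_mul, abs_mul] at this; linarith
  have e1 : β^2 = |β|^2 := (sq_abs _).symm
  have e2 : γ^2 = |γ|^2 := (sq_abs _).symm
  have e3 : α^2 = |α|^2 := (sq_abs _).symm
  rw [e1, e2, e3]
  have p1 := abs_pos.2 hα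
  have p2 := abs_pos.2 hβ
  have p3 := abs_pos.2 hγ
  generalize |α| = a at *
  generalize |β| = b at *
  generalize |γ| = c at *
  obtain ⟨s, rfl⟩ : ∃ s, a = 1 + s := ⟨a-1, by ring⟩
  obtain ⟨t, rfl⟩ : ∃ s, b = 1 + s := ⟨b-1, by ring⟩
  obtain ⟨u, rfl⟩ : ∃ s, c = 1 + s := ⟨c-1, by ring⟩
  have hs : 0 ≤ s := by omega
  have ht : 0 ≤ t := by omega
  have hu : 0 ≤ u := by omega
  have m1 : 0 ≤ ((1+s)^2-1)*((B - (1+t)) + (C - (1+u))) := mul_nonneg (by nlinarith) (by linarith)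
  have m2 : 0 ≤ ((1+t)^2-1)*((A - (1+s)) + (C - (1+u))) := mul_nonneg (by nlinarith) (by linarith)
  have m3 : 0 ≤ ((1+u)^2-1)*((A - (1+s)) + (B - (1+t))) := mul_nonneg (by nlinarith) (by linarith)
  have k1 := mul_nonneg hs ht
  have k2 := mul_nonneg hs hu
  have k3 := mul_nonneg ht hu
  have k4 : 0 ≤ s*(t-u)^2 := mul_nonneg hs (sq_nonneg _)
  have k5 : 0 ≤ t*(s-u)^2 := mul_nonneg ht (sq_nonneg _)
  have k6 : 0 ≤ u*(t-s)^2 := mul_nonneg hu (sq_nonneg _)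
  have k7 : 0 ≤ s*(t*u) := mul_nonneg hs k3
  nlinarith [sq_nonneg s, sq_nonneg t, sq_nonneg u]

/-- product of three integers with given sum `3 t + i` -/
theorem prod3 (X Y Z t : ℤ) (hX : 0 ≤ X) (hY : 0 ≤ Y) (hZ : 0 ≤ Z) (ht : 0 ≤ t) :
    (X + Y + Z = 3*t → X*Y*Z ≤ t^3) ∧ (X+Y+Z = 3*t+1 → X*Y*Z ≤ t^2*(t+1)) ∧
    (X+Y+Z = 3*t+2 → X*Y*Z ≤ t*(t+1)^2) := by
  wlog h : X ≤ Y ∧ Y ≤ Z generalizing X Y Z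
  · rcases le_total X Y with a | a <;> rcases le_total Y Z with b | b <;> rcases le_total X Z with c | c
    · exact this X Y Z hX hY hZ ⟨a, b⟩
    · exact this X Y Z hX hY hZ ⟨a, b⟩
    · have := this X Z Y hX hZ hY ⟨c, b⟩
      rwa [show X + Z + Y = X + Y + Z by ring, show X * Z * Y = X * Y * Z by ring] at this
    · have := this Z X Y hZ hX hY ⟨c, a⟩
      rwa [show Z + X + Y = X + Y + Z by ring, show Z * X * Y = X * Y * Z by ring] at this
    · have := this Y X Z hY hX hZ ⟨a, c⟩
      rwa [show Y + X + Z = X + Y + Z by ring, show Y * X * Z = X * Y * Z by ring] at this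
    · have := this Y Z X hY hZ hX ⟨b, c⟩
      rwa [show Y + Z + X = X + Y + Z by ring, show Y * Z * X = X * Y * Z by ring] at this
    · have := this Z Y X hZ hY hX ⟨b, a⟩
      rwa [show Z + Y + X = X + Y + Z by ring, show Z * Y * X = X * Y * Z by ring] at this
    · have := this Z Y X hZ hY hX ⟨b, a⟩
      rwa [show Z + Y + X = X + Y + Z by ring, show Z * Y * X = X * Y * Z by ring] at this
  obtain ⟨h1, h2⟩ := h
  -- X ≤ t
  refine ⟨fun h => ?_, fun h => ?_, fun h => ?_⟩
  · obtain ⟨v, rfl⟩ : ∃ v, X = t - v := ⟨t - X, by ring⟩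
    have hv : 0 ≤ v := by omega
    have : 4*(Y*Z) ≤ (2*t+v)^2 := by
      have : Y + Z = 2*t+v := by omega
      rw [← this]; nlinarith [sq_nonneg (Y-Z)]
    have k := mul_le_mul_of_nonneg_left this hX
    have e : 4*t^3 - (t-v)*(2*t+v)^2 = v^2*(2*t+(t - v) + 2*v) := by ring
    have : 0 ≤ v^2*(2*t+(t - v) + 2*v) := by positivity
    nlinarith
  · obtain ⟨v, rfl⟩ : ∃ v, X = t - v := ⟨t - X, by ring⟩
    have hv : 0 ≤ v := by omega
    have hs : Y + Z = 2*t+v+1 := by omega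
    have : 4*(Y*Z) ≤ (2*t+v+1)^2 - (if v = 0 then 1 else 0) := by
      split_ifs with h0
      · have : 1 ≤ (Y-Z)^2 := by
          have : Y ≠ Z := by omega
          have := sub_ne_zero.2 this
          have := sq_pos_of_ne_zero this
          omega
        rw [← hs]; nlinarith
      rw [← hs]; nlinarith [sq_nonneg (Y-Z)]
    have k := mul_le_mul_of_nonneg_left this hX
    split_ifs at k with h0
    · subst h0; nlinarith
    · have : 1 ≤ v := by omega
      nlinarith [mul_nonneg hv hX, mul_nonneg (mul_nonneg hv hv) hX, mul_nonneg hv hv, mul_nonneg (by omega : 0 ≤ v - 1) hX, mul_nonneg (mul_nonneg (by omega : 0 ≤ v - 1) hv) hX, mul_nonneg (by omega : 0 ≤ v - 1) hv,mul_nonneg (mul_nonneg (by omega : 0 ≤ v - 1) hv) hv]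
  · obtain ⟨v, rfl⟩ : ∃ v, X = t - v := ⟨t - X, by ring⟩
    have hv : 0 ≤ v := by omega
    have : 4*(Y*Z) ≤ (2*t+v+2)^2 := by
      have : Y + Z = 2*t+v+2 := by omega
      rw [← this]; nlinarith [sq_nonneg (Y-Z)]
    have k := mul_le_mul_of_nonneg_left this hX
    nlinarith [mul_nonneg hv hX, mul_nonneg (mul_nonneg hv hv) hX, mul_nonneg hv hv, mul_nonneg (mul_nonneg hv hv) hv]

theorem h_even2 (q h : ℤ) (hq : 0 ≤ q) (h0 : 0 ≤ h) :
  (h ≤ 6*q → h^2*(6*q-h) - h ≤ 32*q^3) ∧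
  (h ≤ 6*q+2 → h^2*(6*q+2-h) - h ≤ 32*q^3+32*q^2+8*q) ∧
  (h ≤ 6*q+4 → h^2*(6*q+4-h) - h ≤ 32*q^3+64*q^2+40*q+8) := by
  obtain ⟨v, rfl⟩ : ∃ v, h = 4*q + v := ⟨h - 4*q, by ring⟩
  have hv := sq_nonneg v
  refine ⟨fun h => ?_, fun h => ?_, fun h => ?_⟩
  · have : 0 ≤ v^2*(6*q + v) := mul_nonneg hv (by omega)
    nlinarith
  · rcases lt_trichotomy v 1 with h1 | h1 | h1
    · -- v ≤ 0
      have : 0 ≤ v^2*(4*q + v) := mul_nonneg hv h0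
      nlinarith [mul_nonneg hq (by omega : 0 ≤ -v)]
    · subst h1; nlinarith
    · have : 0 ≤ (v-1)*(v-2) := mul_nonneg (by omega) (by omega)
      nlinarith [mul_nonneg hq this, mul_nonneg (by omega : 0 ≤ v) this]
  · rcases lt_trichotomy v 2 with h1 | h1 | h1
    · rcases (by omega : v = 1 ∨ v ≤ 0) with h2 | h2
      · subst h2; nlinarith
      have : 0 ≤ v^2*(4*q + v) := mul_nonneg hv h0
      nlinarith [mul_nonneg hq (by omega : 0 ≤ -v)]
    · subst h1; nlinarith
    · have : 0 ≤ (v-2)*(v-3) := mul_nonneg (by omega) (by omega)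
      nlinarith [mul_nonneg hq this, mul_nonneg (by omega : 0 ≤ v) this]

theorem h_odd1 (q h : ℤ) (hq : 0 ≤ q) (h0 : 0 ≤ h) :
  (h ≤ 6*q+1 → 2 * ((6*q+1-h)*(h^2-1)) ≤ 64*q^3 + 32*q^2) ∧
  (h ≤ 6*q+3 → h ≠ 4*q+2 → 2*((6*q+3-h)*(h^2-1)) ≤ 64*q^3+96*q^2+40*q+4) ∧
  (h ≤ 6*q+5 → 2*((6*q+5-h)*(h^2-1)) ≤ 64*q^3+160*q^2+128*q+32) := by
  obtain ⟨v, rfl⟩ : ∃ v, h = 4*q + v := ⟨h - 4*q, by ring⟩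
  have hv := sq_nonneg v
  refine ⟨fun h => ?_, fun h hne => ?_, fun h => ?_⟩
  · rcases (by omega : v = 1 ∨ v ≤ 0 ∨ 2 ≤ v) with h2 | h2 | h2
    · subst h2; nlinarith
    · have : 0 ≤ v^2*(4*q + v) := mul_nonneg hv h0
      nlinarith [mul_nonneg hq (by omega : 0 ≤ -v)]
    · have : 0 ≤ (v-1)*(v-2) := mul_nonneg (by omega) (by omega)
      nlinarith [mul_nonneg hq this, mul_nonneg (by omega : 0 ≤ v) this]
  · rcases (by omega : v = 1 ∨ v ≤ 0 ∨ 3 ≤ v) with h2 | h2 | h2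
    · subst h2; nlinarith
    · have : 0 ≤ v^2*(4*q + v) := mul_nonneg hv h0
      nlinarith [mul_nonneg hq (by omega : 0 ≤ -v)]
    · have : 0 ≤ (v-1)*(v-3) := mul_nonneg (by omega) (by omega)
      nlinarith [mul_nonneg hq this, mul_nonneg (by omega : 0 ≤ v) this]
  · rcases (by omega : v = 1 ∨ v = 2 ∨ v = 3 ∨ v ≤ 0 ∨ 4 ≤ v) with h2 | h2 | h2 | h2 | h2
    · subst h2; nlinarith
    · subst h2; nlinarith
    · subst h2; nlinarith
    · have : 0 ≤ v^2*(4*q + v) := mul_nonneg hv h0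
      nlinarith [mul_nonneg hq (by omega : 0 ≤ -v)]
    · have : 0 ≤ (v-3)*(v-4) := mul_nonneg (by omega) (by omega)
      nlinarith [mul_nonneg hq this, mul_nonneg (by omega : 0 ≤ v) this]


theorem Pcore_same (q A B C α β γ : ℤ) (r : ℕ) (hr : r < 6) (hq : 0 ≤ q) (ha : |α| ≤ A) (hb : |β| ≤ B) (hc : |γ| ≤ C)
    (pa : 2 ∣ A - α) (pb : 2 ∣ B - β) (pc : 2 ∣ C - γ) (hs : A + B + C = 6*q + r)
    (h1 : 2 ∣ A - B) (h2 : 2 ∣ B - C) :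
    (A+B)*(B+C)*(C+A) - (α^2*(B+C) + β^2*(A+C) + γ^2*(A+B) + 2*α*β*γ) ≤
      4*(16*q^3 + 8*r*q^2 + q * Lc r + Cc r) := by
  have hA := (abs_nonneg α).trans ha
  have hB := (abs_nonneg β).trans hb
  have hC := (abs_nonneg γ).trans hc
  obtain ⟨X, hX⟩ : ∃ X, B + C = 2*X := ⟨(B+C)/2, by omega⟩
  obtain ⟨Y, hY⟩ : ∃ X, C + A = 2*X := ⟨(C+A)/2, by omega⟩
  obtain ⟨Z, hZ⟩ : ∃ X, A + B = 2*X := ⟨(A+B)/2, by omega⟩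
  have e : (A+B)*(B+C)*(C+A) = 8*(X*Y*Z) := by rw [hX, hY, hZ]; ring
  have q0 := Q1 A B C α β γ ha hb hc
  have q0' : 0 ≤ α^2*(B+C) := mul_nonneg (sq_nonneg _) (by omega)
  have k0 := prod3 X Y Z (2*q) (by omega) (by omega) (by omega) (by omega)
  have k1 := prod3 X Y Z (2*q+1) (by omega) (by omega) (by omega) (by omega)
  rw [e]
  by_cases par : 2 ∣ A
  · interval_cases r <;> simp only [Lc, Cc] <;> push_cast at *
    · have := k0.1 (by omega); linarith
    · omega
    · have := k0.2.2 (by omega); linarith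
    · omega
    · have := k1.2.1 (by omega); linarith
    · omega
  · have q1 := Q3 A B C α β γ ha hb hc (by omega) (by omega) (by omega)
    interval_cases r <;> simp only [Lc, Cc] <;> push_cast at *
    · omega
    · have := k0.2.1 (by omega); linarith
    · omega
    · have := k1.1 (by omega); linarith
    · omega
    · have := k1.2.2 (by omega); linarith

theorem Pcore_diff (q A B C α β γ : ℤ) (r : ℕ) (hr : r < 6) (hq : 0 ≤ q) (ha : |α| ≤ A) (hb : |β| ≤ B) (hc : |γ| ≤ C)
    (pa : 2 ∣ A - α) (pb : 2 ∣ B - β) (pc : 2 ∣ C - γ) (hs : A + B + C = 6*q + r)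
    (h1 : ¬ 2 ∣ A - B) (h2 : 2 ∣ B - C) :
    (A+B)*(B+C)*(C+A) - (α^2*(B+C) + β^2*(A+C) + γ^2*(A+B) + 2*α*β*γ) ≤
      4*(16*q^3 + 8*r*q^2 + q * Lc r + Cc r) := by
  have hA := (abs_nonneg α).trans ha
  have hB := (abs_nonneg β).trans hb
  have hC := (abs_nonneg γ).trans hc
  obtain ⟨h, hh⟩ : ∃ h, (A + B) + (C + A) = 2*h := ⟨((A + B) + (C + A))/2, by omega⟩
  have hx : B + C = 2*(6*q+r-h) := by omega
  have hyz : (A+B)*(C+A) ≤ h^2 := by nlinarith [sq_nonneg ((A+B)-(C+A))]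
  have e : (A+B)*(B+C)*(C+A) = (B+C)*((A+B)*(C+A)) := by ring
  have k1 := h_even2 q h hq (by omega)
  have k2 := h_odd1 q h hq (by omega)
  have hx0 : 0 ≤ B + C := by omega
  rw [e]
  by_cases par : 2 ∣ A
  · have q1 := Q2 A B C α β γ ha hb hc (by omega) (by omega) (by omega)
    have e1 := mul_le_mul_of_nonneg_left hyz hx0
    generalize hM : (A+B)*(C+A) = M at *
    rw [hx] at e1 ⊢
    rw [hx] at q1
    interval_cases r <;> simp only [Lc, Cc] <;> push_cast at *
    · have := k1.1 (by omega); linarith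
    · omega
    · have := k1.2.1 (by omega); linarith
    · omega
    · have := k1.2.2 (by omega); linarith
    · omega
  · have q1 := Q1 A B C α β γ ha hb hc
    have hα : 1 ≤ α^2 := by
      have : α ≠ 0 := by omega
      have := sq_pos_of_ne_zero this
      omega
    have q2 : 1 * (B+C) ≤ α^2*(B+C) := mul_le_mul_of_nonneg_right hα hx0
    have q3 : (B+C)*((A+B)*(C+A)) - (α^2*(B+C) + β^2*(A+C) + γ^2*(A+B) + 2*α*β*γ) ≤ (B+C)*((A+B)*(C+A) - 1) := by
      linarith
    refine q3.trans ?_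
    have e1 := mul_le_mul_of_nonneg_left (sub_le_sub_right hyz 1) hx0
    by_cases hsp : r = 3 ∧ h = 4*q+2
    · obtain ⟨rfl, rfl⟩ := hsp
      have hyz' : (A+B)*(C+A) ≤ (4*q+2)^2 - 1 := by
        have : (A+B) ≠ C + A := by omega
        have := sq_pos_of_ne_zero (sub_ne_zero.2 this)
        have h3 : (A+B)*(C+A)*4 = ((A+B)+(C+A))^2 - (A+B-(C+A))^2 := by ring
        rw [hh] at h3
        have : 4*(A+B)*(C+A) < 4*(4*q+2)^2 := by nlinarith
        linarith
      have e1 := mul_le_mul_of_nonneg_left (sub_le_sub_right hyz' 1) hx0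
      refine e1.trans ?_
      rw [hx]
      simp only [Lc, Cc]; push_cast
      linarith
    · refine e1.trans ?_
      rw [hx]
      interval_cases r <;> simp only [Lc, Cc] <;> push_cast at *
      · omega
      · have := k2.1 (by omega); linarith
      · omega
      · have := k2.2.1 (by omega) (by simpa using hsp); linarith
      · omega
      · have := k2.2.2 (by omega); linarith

theorem Pmax (a a' b b' c c' q r : ℕ) (hr : r < 6) (hs : a + a' + b + b' + c + c' = 6*q+r) :
    Pf a a' b b' c c' ≤ Pstar q r := by
  have key : ((a+a'+(b+b'))*((b+b')+(c+c'))*((c+c')+(a+a')) : ℤ) - (((a:ℤ)-a')^2*((b+b')+(c+c')) + ((b:ℤ)-b')^2*((a+a')+(c+c')) + ((c:ℤ)-c')^2*((a+a')+(b+b')) + 2*((a:ℤ)-a')*((b:ℤ)-b')*((c:ℤ)-c')) ≤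
      4*(16*q^3 + 8*r*q^2 + q * Lc r + Cc r) := by
    have ha : |(a:ℤ)-a'| ≤ a + a' := abs_le.2 ⟨by omega, by omega⟩
    have hb : |(b:ℤ)-b'| ≤ b + b' := abs_le.2 ⟨by omega, by omega⟩
    have hc : |(c:ℤ)-c'| ≤ c + c' := abs_le.2 ⟨by omega, by omega⟩
    have pa : (2:ℤ) ∣ (a+a') - (a-a') := ⟨a', by ring⟩
    have pb : (2:ℤ) ∣ (b+b') - (b-b') := ⟨b', by ring⟩
    have pc : (2:ℤ) ∣ (c+c') - (c-c') := ⟨c', by ring⟩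
    have hs' : ((a:ℤ)+a') + (b+b') + (c+c') = 6*q+r := by omega
    generalize (a:ℤ)+a' = A at *
    generalize (b:ℤ)+b' = B at *
    generalize (c:ℤ)+c' = C at *
    generalize (a:ℤ)-a' = α at *
    generalize (b:ℤ)-b' = β at *
    generalize (c:ℤ)-c' = γ at *
    have hq : (0:ℤ) ≤ q := by positivity
    by_cases h1 : 2 ∣ A - B
    · by_cases h2 : 2 ∣ B - C
      · exact Pcore_same q A B C α β γ r hr hq ha hb hc pa pb pc hs' h1 h2
      · have := Pcore_diff q C A B γ α β r hr hq hc ha hb pc pa pb (by omega) (by omega) h1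
        linarith
    · by_cases h2 : 2 ∣ B - C
      · exact Pcore_diff q A B C α β γ r hr hq ha hb hc pa pb pc hs' h1 h2
      · have := Pcore_diff q B C A β γ α r hr hq hb hc ha pb pc pa (by omega) h2 (by omega)
        linarith
  have : (4:ℤ) * (Pf a a' b b' c c' : ℕ) ≤ 4 * (Pstar q r : ℕ) := by
    unfold Pf Pstar; push_cast
    linarith
  omega


def E2f (a a' b b' c c' : ℕ) : ℕ :=
  a*a' + a*b + a*b' + a*c + a*c' + a'*b + a'*b' + a'*c + a'*c' + b*b' + b*c + b*c' + b'*c + b'*c' + c*c'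

theorem intgap (w q : ℤ) : 0 ≤ (w - q)*(w-q-1) := by
  rcases le_or_gt w q with h | h
  · exact mul_nonneg_of_nonpos_of_nonpos (by omega) (by omega)
  · exact mul_nonneg (by omega) (by omega)

theorem intgap_eq (w q : ℤ) (h : (w - q)*(w-q-1) = 0) : w = q ∨ w = q+1 := by
  rcases mul_eq_zero.1 h with h | h <;> omega

theorem E2id (a a' b b' c c' m : ℕ) (q : ℤ) (hs : a + a' + b + b' + c + c' = m) :
    2 * (E2f a a' b b' c c' : ℤ) = (m:ℤ)^2 + 6*q*(q+1) - (2*q+1)*m - ((a - q)*(a-q-1) + (a' - q)*(a'-q-1)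
    + (b - q)*(b-q-1) + (b' - q)*(b'-q-1) + (c - q)*(c-q-1) + (c' - q)*(c'-q-1)) := by
  subst hs; unfold E2f; push_cast; ring

theorem E2max (a a' b b' c c' m q : ℕ) (hs : a + a' + b + b' + c + c' = m) :
    2 * (E2f a a' b b' c c' : ℤ) ≤ (m:ℤ)^2 + 6*q*(q+1) - (2*q+1)*m := by
  rw [E2id a a' b b' c c' m q hs]
  linarith [intgap a q, intgap a' q, intgap b q, intgap b' q, intgap c q, intgap c' q]

theorem E2eq (a a' b b' c c' m q : ℕ) (hs : a + a' + b + b' + c + c' = m)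
    (h : 2 * (E2f a a' b b' c c' : ℤ) = (m:ℤ)^2 + 6*q*(q+1) - (2*q+1)*m) :
    (a = q ∨ a = q+1) ∧ (a' = q ∨ a' = q+1) ∧ (b = q ∨ b = q+1) ∧ (b' = q ∨ b' = q+1) ∧
    (c = q ∨ c = q+1) ∧ (c' = q ∨ c' = q+1) := by
  rw [E2id a a' b b' c c' m q hs] at h
  have h1 := intgap a q
  have h2 := intgap a' q
  have h3 := intgap b q
  have h4 := intgap b' q
  have h5 := intgap c q
  have h6 := intgap c' q
  have k1 := intgap_eq a q (by linarith)
  have k2 := intgap_eq a' q (by linarith)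
  have k3 := intgap_eq b q (by linarith)
  have k4 := intgap_eq b' q (by linarith)
  have k5 := intgap_eq c q (by linarith)
  have k6 := intgap_eq c' q (by linarith)
  omega

theorem E2bal (a a' b b' c c' m q : ℕ) (hs : a + a' + b + b' + c + c' = m)
    (h : (a = q ∨ a = q+1) ∧ (a' = q ∨ a' = q+1) ∧ (b = q ∨ b = q+1) ∧ (b' = q ∨ b' = q+1) ∧
    (c = q ∨ c = q+1) ∧ (c' = q ∨ c' = q+1)) :
    2 * (E2f a a' b b' c c' : ℤ) = (m:ℤ)^2 + 6*q*(q+1) - (2*q+1)*m := by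
  rw [E2id a a' b b' c c' m q hs]
  have z : ∀ x : ℕ, (x = q ∨ x = q+1) → ((x:ℤ)-q)*(x-q-1) = 0 := by
    rintro x (rfl | rfl) <;> push_cast <;> ring
  rw [z a h.1, z a' h.2.1, z b h.2.2.1, z b' h.2.2.2.1, z c h.2.2.2.2.1, z c' h.2.2.2.2.2]; ring

/-- optimal number of opposite pairs of long chains -/
def Oc : ℕ → ℕ
  | 2 => 1 | 3 => 1 | 4 => 2 | 5 => 2 | 6 => 3 | _ => 0

def bn (b : Bool) : ℕ := if b then 1 else 0

def oppc (a a' b b' c c' : Bool) : ℕ := bn (a && a') + bn (b && b') + bn (c && c')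
def cntc (a a' b b' c c' : Bool) : ℕ := bn a + bn a' + bn b + bn b' + bn c + bn c'

theorem Pbal (a a' b b' c c' : Bool) (q : ℕ) :
    Pf (q + bn a) (q + bn a') (q + bn b) (q + bn b') (q + bn c) (q + bn c') =
      16*q^3 + 8*(cntc a a' b b' c c')*q^2 +
        q*(3*((cntc a a' b b' c c').choose 2) + oppc a a' b b' c c') +
        Pf (bn a) (bn a') (bn b) (bn b') (bn c) (bn c') := by
  cases a <;> cases a' <;> cases b <;> cases b' <;> cases c <;> cases c' <;>
    simp [Pf, bn, oppc, cntc, Nat.choose] <;> ring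

theorem Pbal_opt (a a' b b' c c' : Bool) (q : ℕ) (hr : cntc a a' b b' c c' < 6)
    (h : oppc a a' b b' c c' = Oc (cntc a a' b b' c c')) :
    Pf (q + bn a) (q + bn a') (q + bn b) (q + bn b') (q + bn c) (q + bn c') =
      Pstar q (cntc a a' b b' c c') := by
  rw [Pbal, Pstar]
  revert a a' b b' c c'
  have : ∀ a a' b b' c c' : Bool, cntc a a' b b' c c' < 6 →
    oppc a a' b b' c c' = Oc (cntc a a' b b' c c') →
    3*((cntc a a' b b' c c').choose 2) + oppc a a' b b' c c' = Lc (cntc a a' b b' c c') ∧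
    Pf (bn a) (bn a') (bn b) (bn b') (bn c) (bn c') = Cc (cntc a a' b b' c c') := by decide
  intro a a' b b' c c' h1 h2
  rw [(this a a' b b' c c' h1 h2).1, (this a a' b b' c c' h1 h2).2]

theorem Pbal_opp (a a' b b' c c' : Bool) (q : ℕ) (hq : 1 ≤ q) (hr : cntc a a' b b' c c' < 6)
    (h : Pf (q + bn a) (q + bn a') (q + bn b) (q + bn b') (q + bn c) (q + bn c') =
      Pstar q (cntc a a' b b' c c')) :
    oppc a a' b b' c c' = Oc (cntc a a' b b' c c') := by
  rw [Pbal, Pstar] at h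
  have : ∀ a a' b b' c c' : Bool, cntc a a' b b' c c' < 6 →
    (3*((cntc a a' b b' c c').choose 2) + oppc a a' b b' c c' = Lc (cntc a a' b b' c c') →
      oppc a a' b b' c c' = Oc (cntc a a' b b' c c')) ∧ 
    3*((cntc a a' b b' c c').choose 2) + oppc a a' b b' c c' ≤ Lc (cntc a a' b b' c c') ∧
    Pf (bn a) (bn a') (bn b) (bn b') (bn c) (bn c') ≤ Cc (cntc a a' b b' c c') := by decide
  obtain ⟨h1, h2, h3⟩ := this a a' b b' c c' hr
  apply h1
  by_contra hne
  have := Nat.mul_lt_mul_of_pos_left (lt_of_le_of_ne h2 hne) hq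
  omega

/-- canonical pattern -/
def es : ℕ → Fin 4 → Fin 4 → Bool
  | 1, i, j => (i, j) = (0, 1)
  | 2, i, j => (i, j) = (0, 1) || (i, j) = (2, 3)
  | 3, i, j => (i, j) = (0, 1) || (i, j) = (1, 2) || (i, j) = (2, 3)
  | 4, i, j => !((i, j) = (0, 1) || (i, j) = (2, 3))
  | 5, i, j => !((i, j) = (0, 1))
  | _, _, _ => false

def tb (b01 b23 b02 b13 b03 b12 : Bool) (i j : Fin 4) : Bool :=
  ![![false, b01, b02, b03], ![b01, false, b12, b13], ![b02, b12, false, b23], ![b03, b13, b23, false]] i j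

set_option maxRecDepth 100000 in
theorem orb : ∀ b01 b23 b02 b13 b03 b12 : Bool, cntc b01 b23 b02 b13 b03 b12 < 6 →
   oppc b01 b23 b02 b13 b03 b12 = Oc (cntc b01 b23 b02 b13 b03 b12) →
   ∃ s0 s1 s2 s3 : Fin 4, (s0 ≠ s1 ∧ s0 ≠ s2 ∧ s0 ≠ s3 ∧ s1 ≠ s2 ∧ s1 ≠ s3 ∧ s2 ≠ s3) ∧
    ∀ i j : Fin 4, i < j →
      tb b01 b23 b02 b13 b03 b12 (![s0,s1,s2,s3] i) (![s0,s1,s2,s3] j) =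
        es (cntc b01 b23 b02 b13 b03 b12) i j := by
  decide +kernel



abbrev X := ZMod 2 × ZMod 2 × ZMod 2

theorem z2_add_eq_zero (a b : ZMod 2) : a + b = 0 ↔ a = b := by revert a b; decide

theorem connOn_iff (H : Multigraph) (S : Finset H.E) :
    H.ConnOn S ↔ ∀ x : H.V → ZMod 2, (∀ e ∈ S, x (H.src e) = x (H.tgt e)) → ∀ u v, x u = x v := by
  constructor
  · intro h x hx u v
    induction h u v with
    | refl => rfl
    | tail _ hs ih =>
      rw [ih]
      obtain ⟨e, he, ⟨rfl, rfl⟩ | ⟨rfl, rfl⟩⟩ := hs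
      · exact hx e he
      · exact (hx e he).symm
  · intro h u v
    have := h (fun y => if Relation.ReflTransGen (H.stepOn S) u y then 1 else 0) (by
      intro e he
      have : Relation.ReflTransGen (H.stepOn S) u (H.src e) ↔ Relation.ReflTransGen (H.stepOn S) u (H.tgt e) :=
        ⟨fun k => k.tail ⟨e, he, Or.inl ⟨rfl, rfl⟩⟩, fun k => k.tail ⟨e, he, Or.inr ⟨rfl, rfl⟩⟩⟩
      simp only [this]) u v
    simp only [Relation.ReflTransGen.refl, if_true] at this
    by_contra hc
    simp [hc] at this

/-- coboundary -/
def dl (H : Multigraph) : (H.V → ZMod 2) →ₗ[ZMod 2] (H.E → ZMod 2) where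
  toFun x e := x (H.src e) + x (H.tgt e)
  map_add' x y := by ext e; simp; ring
  map_smul' c x := by ext e; simp; ring

theorem dl_zero_iff (H : Multigraph) (x) (e : H.E) : dl H x e = 0 ↔ x (H.src e) = x (H.tgt e) :=
  z2_add_eq_zero _ _

theorem dl_finrank (H : Multigraph) (hc : H.Connected) (hV : Nonempty H.V) :
    Module.finrank (ZMod 2) (LinearMap.range (dl H)) + 1 = H.nV := by
  have h := LinearMap.finrank_range_add_finrank_ker (dl H)
  have hk : Module.finrank (ZMod 2) (LinearMap.ker (dl H)) = 1 := by
    obtain ⟨v⟩ := hV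
    refine finrank_eq_one (⟨fun _ => 1, ?_⟩ : LinearMap.ker (dl H)) ?_ ?_
    · ext e; rfl
    · intro h0
      have := congrFun (congrArg Subtype.val h0) v
      exact absurd (show (1 : ZMod 2) = 0 from this) (by decide)
    · rintro ⟨x, hx⟩
      refine ⟨x v, ?_⟩
      ext u
      change x v * 1 = x u
      rw [mul_one]
      refine (connOn_iff H _).1 hc x ?_ v u
      intro e _
      rw [← dl_zero_iff]
      exact congrFun hx e
  rw [hk] at h
  rw [h]; simp [Multigraph.nV]

/-- labelling -/
def Lab (H : Multigraph) (L : (H.E → ZMod 2) →ₗ[ZMod 2] X) : Prop :=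
  LinearMap.ker L = LinearMap.range (dl H)

def lb {H : Multigraph} (L : (H.E → ZMod 2) →ₗ[ZMod 2] X) (e : H.E) : X := L (Pi.single e 1)

theorem L_eq_sum {H : Multigraph} (L : (H.E → ZMod 2) →ₗ[ZMod 2] X) (y : H.E → ZMod 2) :
    L y = ∑ e, y e • lb L e := by
  rw [LinearMap.pi_apply_eq_sum_univ L y]
  refine Finset.sum_congr rfl fun e _ => ?_
  unfold lb
  congr 2
  ext i; simp [Pi.single_apply, eq_comm]

theorem finrankX : Module.finrank (ZMod 2) X = 3 := by simp [X]

theorem exists_lab (H : Multigraph) (n : ℕ) (hn : 1 ≤ n) (h : memG H n (n+2)) :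
    ∃ L, Lab H L := by
  obtain ⟨h1, h2, h3⟩ := h
  have hV : Nonempty H.V := Fintype.card_pos_iff.1 (by change 0 < H.nV; omega)
  have k := dl_finrank H h3 hV
  have q := Submodule.finrank_quotient_add_finrank (LinearMap.range (dl H))
  have : Module.finrank (ZMod 2) (H.E → ZMod 2) = n + 2 := by
    rw [← h2]; simp [Multigraph.nE]
  have hq : Module.finrank (ZMod 2) ((H.E → ZMod 2) ⧸ LinearMap.range (dl H)) = Module.finrank (ZMod 2) X := by
    rw [finrankX]; omega
  let e := LinearEquiv.ofFinrankEq _ _ hq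
  refine ⟨e.toLinearMap ∘ₗ Submodule.mkQ _, ?_⟩
  unfold Lab
  rw [LinearEquiv.ker_comp, Submodule.ker_mkQ]

theorem lab_flow {H : Multigraph} {L} (h : Lab H L) (x : H.V → ZMod 2) :
    ∑ e, (dl H x e) • lb L e = 0 := by
  rw [← L_eq_sum]
  have : dl H x ∈ LinearMap.ker L := by rw [h]; exact ⟨x, rfl⟩
  exact this

theorem sum_ind {H : Multigraph} (L : (H.E → ZMod 2) →ₗ[ZMod 2] X) (F : Finset H.E) :
    L (fun e => if e ∈ F then 1 else 0) = ∑ e ∈ F, lb L e := by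
  rw [L_eq_sum]
  simp [Finset.sum_ite_mem]

theorem lab_conn {H : Multigraph} {L} (h : Lab H L) (hc : H.Connected) (F : Finset H.E) :
    H.ConnOn (univ \ F) ↔ ∀ F' ⊆ F, F'.Nonempty → ∑ e ∈ F', lb L e ≠ 0 := by
  constructor
  · intro hF F' hF' ⟨f, hf⟩ h0
    rw [← sum_ind] at h0
    have : (fun e => if e ∈ F' then (1 : ZMod 2) else 0) ∈ LinearMap.range (dl H) := by
      rw [← h]; exact h0
    obtain ⟨x, hx⟩ := this
    have hx' : ∀ e ∈ univ \ F, x (H.src e) = x (H.tgt e) := by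
      intro e he
      rw [← dl_zero_iff, hx]
      have : e ∉ F' := fun k => (mem_sdiff.1 he).2 (hF' k)
      simp [this]
    have hconst := (connOn_iff H _).1 hF x hx'
    have := congrFun hx f
    rw [if_pos hf, (dl_zero_iff H x f).2 (hconst _ _)] at this
    exact absurd this (by decide)
  · intro hF
    rw [connOn_iff]
    intro x hx
    have hne : ¬ (univ.filter fun e => dl H x e ≠ 0).Nonempty := by
      intro hn
      refine hF _ ?_ hn ?_
      · intro e he
        by_contra hc
        refine (mem_filter.1 he).2 ((dl_zero_iff _ _ _).2 (hx e (by simp [hc])))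
      · rw [← lab_flow h x, Finset.sum_filter]
        refine Finset.sum_congr rfl fun e _ => ?_
        generalize dl H x e = t
        have : t = 0 ∨ t = 1 := by revert t; decide
        rcases this with rfl | rfl <;> simp
    refine (connOn_iff H _).1 hc x fun e _ => ?_
    by_contra hcon
    exact hne ⟨e, by simp [dl_zero_iff, hcon]⟩



def cc (H : Multigraph) (i : ℕ) : ℕ :=
  ((Finset.univ : Finset (Finset H.E)).filter fun F => F.card = i ∧ H.ConnOn (univ \ F)).card

theorem rel_eq (H : Multigraph) (p : ℝ) :
    H.rel p = ∑ i ∈ range (H.nE + 1), (cc H i : ℝ) * (p ^ (H.nE - i) * (1 - p) ^ i) := by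
  unfold Multigraph.rel
  have h1 : ∑ S : Finset H.E, (if H.ConnOn S then p ^ S.card * (1 - p) ^ (H.nE - S.card) else 0)
      = ∑ F : Finset H.E, if H.ConnOn (univ \ F) then p ^ (H.nE - F.card) * (1 - p) ^ F.card else 0 := by
    refine Finset.sum_bij' (fun S _ => univ \ S) (fun S _ => univ \ S) (by simp) (by simp) (by simp) (by simp) ?_
    intro S _
    have hc : (univ \ S : Finset H.E).card = H.nE - S.card := by
      rw [Finset.card_sdiff_of_subset (subset_univ _)]; rfl
    have hle : S.card ≤ H.nE := Finset.card_le_univ S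
    rw [hc, Nat.sub_sub_self hle]
    simp
  rw [h1]
  have hm : ∀ F ∈ (univ : Finset (Finset H.E)), F.card ∈ range (H.nE + 1) := fun F _ => by
    have hle : F.card ≤ H.nE := Finset.card_le_univ F
    simp; omega
  rw [← Finset.sum_fiberwise_of_maps_to hm]
  refine Finset.sum_congr rfl fun i _ => ?_
  unfold cc
  rw [← Finset.sum_filter, Finset.filter_filter, Finset.card_eq_sum_ones, Nat.cast_sum, Finset.sum_mul]
  refine Finset.sum_congr rfl fun F hF => ?_
  rw [(mem_filter.1 hF).2.1]; simp

theorem cc_zero_of (H : Multigraph) (n : ℕ) (hn : 1 ≤ n) (h : memG H n (n+2)) (i : ℕ) (hi : 4 ≤ i) :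
    cc H i = 0 := by
  obtain ⟨h1, h2, h3⟩ := h
  have hV : Nonempty H.V := Fintype.card_pos_iff.1 (by change 0 < H.nV; omega)
  unfold cc
  rw [Finset.card_eq_zero, Finset.filter_eq_empty_iff]
  rintro F - ⟨hF, hc⟩
  let H' : Multigraph := { V := H.V, E := {e : H.E // e ∈ univ \ F}, src := fun e => H.src e.1, tgt := fun e => H.tgt e.1 }
  have hc' : H'.Connected := by
    refine (connOn_iff H' univ).2 ?_
    intro x hx
    exact (connOn_iff H _).1 hc x (fun e he => hx ⟨e, he⟩ (mem_univ _))
  have k := dl_finrank H' hc' hV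
  have k2 := Submodule.finrank_le (LinearMap.range (dl H'))
  have k3 : Module.finrank (ZMod 2) (H'.E → ZMod 2) = n + 2 - i := by
    rw [Module.finrank_fintype_fun_eq_card]
    change Fintype.card {e : H.E // e ∈ univ \ F} = _
    rw [Fintype.card_coe, Finset.card_sdiff_of_subset (subset_univ _), hF, ← h2]; rfl
  have k4 : H'.nV = n := h1
  have := Finset.card_le_univ F
  have h2' : Fintype.card H.E = n + 2 := h2
  omega

def NN {H : Multigraph} (L : (H.E → ZMod 2) →ₗ[ZMod 2] X) (u : X) : ℕ := (univ.filter fun e => lb L e = u).card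

def Ind (A : Finset X) : Prop := ∀ B ∈ A.powerset, B ≠ ∅ → ∑ u ∈ B, u ≠ 0

instance (A : Finset X) : Decidable (Ind A) := by unfold Ind; infer_instance

theorem conn_ind {H : Multigraph} {L} (h : Lab H L) (hc : H.Connected) (F : Finset H.E) :
    H.ConnOn (univ \ F) ↔ Set.InjOn (lb L) F ∧ Ind (F.image (lb L)) := by
  rw [lab_conn h hc]
  constructor
  · intro hF
    have hinj : Set.InjOn (lb L) F := by
      intro e he f hf hef
      by_contra hne
      refine hF {e, f} ?_ ⟨e, by simp⟩ ?_
      · intro t ht; simp at ht; rcases ht with rfl | rfl <;> assumption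
      · rw [sum_pair hne, hef]
        exact CharTwo.add_self_eq_zero _
    refine ⟨hinj, ?_⟩
    intro B hB hne
    rw [mem_powerset, Finset.subset_image_iff] at hB
    obtain ⟨F', hF', rfl⟩ := hB
    rw [Finset.sum_image (fun a ha b hb => hinj (hF' ha) (hF' hb))]
    exact hF F' hF' (by rwa [Finset.nonempty_iff_ne_empty, Ne, ← Finset.image_eq_empty (f := lb L)])
  · rintro ⟨hinj, hI⟩ F' hF' hne
    have := hI (F'.image (lb L)) (mem_powerset.2 (Finset.image_subset_image hF')) (by simpa [Finset.nonempty_iff_ne_empty] using hne)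
    rwa [Finset.sum_image (fun a ha b hb => hinj (hF' ha) (hF' hb))] at this

theorem fiber_card {H : Multigraph} (L : (H.E → ZMod 2) →ₗ[ZMod 2] X) (A : Finset X) :
    ((Finset.univ : Finset (Finset H.E)).filter fun F : Finset H.E => Set.InjOn (lb L) (F : Set H.E) ∧ F.image (lb L) = A).card
      = ∏ u ∈ A, NN L u := by
  unfold NN
  rw [← Finset.card_pi]
  symm
  have key : ∀ g ∈ A.pi (fun u => univ.filter fun e => lb L e = u), ∀ u : A, lb L (g u.1 u.2) = u.1 := by
    intro g hg u
    have := (mem_pi.1 hg) u.1 u.2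
    exact (mem_filter.1 this).2
  refine Finset.card_bij (fun g _ => A.attach.image fun u => g u.1 u.2) ?_ ?_ ?_
  · intro g hg
    rw [mem_filter]
    refine ⟨mem_univ _, ?_, ?_⟩
    · intro e he f hf hef
      simp only [coe_image, Set.mem_image, mem_coe, mem_attach, true_and] at he hf
      obtain ⟨a, rfl⟩ := he
      obtain ⟨b, rfl⟩ := hf
      rw [key g hg, key g hg] at hef
      have : a = b := Subtype.ext hef
      rw [this]
    · rw [image_image]
      ext u
      simp only [mem_image, mem_attach, true_and, Function.comp]
      constructor
      · rintro ⟨a, rfl⟩; rw [key g hg]; exact a.2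
      · intro hu; exact ⟨⟨u, hu⟩, key g hg _⟩
  · intro g hg g' hg' heq
    funext u hu
    have : g u hu ∈ A.attach.image fun u => g' u.1 u.2 := by
      rw [← heq]; exact mem_image.2 ⟨⟨u, hu⟩, mem_attach _ _, rfl⟩
    obtain ⟨v, -, hv⟩ := mem_image.1 this
    have h1 := key g hg ⟨u, hu⟩
    have h2 := key g' hg' v
    rw [hv, h1] at h2
    subst h2
    exact hv.symm
  · intro F hF
    obtain ⟨-, hinj, rfl⟩ := mem_filter.1 hF
    have : ∀ u ∈ F.image (lb L), ∃ e ∈ F, lb L e = u := fun u hu => by simpa using hu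
    choose g hg1 hg2 using this
    refine ⟨g, ?_, ?_⟩
    · rw [mem_pi]; intro u hu; simp [hg2]
    · ext e
      simp only [mem_image, mem_attach, true_and]
      constructor
      · rintro ⟨u, rfl⟩; exact hg1 _ _
      · intro he
        exact ⟨⟨lb L e, mem_image_of_mem _ he⟩, hinj (hg1 _ _) he (hg2 _ _)⟩

theorem cc_eq {H : Multigraph} {L} (h : Lab H L) (hc : H.Connected) (i : ℕ) :
    cc H i = ∑ A ∈ (powersetCard i (univ : Finset X)).filter Ind, ∏ u ∈ A, NN L u := by
  unfold cc
  rw [Finset.card_eq_sum_card_fiberwise (f := fun F : Finset H.E => F.image (lb L)) (t := (powersetCard i (univ : Finset X)).filter Ind)]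
  · refine Finset.sum_congr rfl fun A hA => ?_
    rw [← fiber_card, Finset.filter_filter]
    congr 1
    ext F
    simp only [mem_filter, mem_univ, true_and, conn_ind h hc]
    rw [mem_filter, mem_powersetCard] at hA
    constructor
    · rintro ⟨⟨-, h1, -⟩, rfl⟩; exact ⟨h1, rfl⟩
    · rintro ⟨h1, rfl⟩
      refine ⟨⟨?_, h1, hA.2⟩, rfl⟩
      rw [← hA.1.2, Finset.card_image_of_injOn h1]
  · intro F hF
    simp only [coe_filter, Set.mem_ofPred_eq, mem_univ, true_and, conn_ind h hc] at hF
    simp only [coe_filter, Set.mem_ofPred_eq, mem_powersetCard, subset_univ, true_and]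
    exact ⟨by rw [Finset.card_image_of_injOn hF.2.1]; exact hF.1, hF.2.2⟩

theorem cc0 {H : Multigraph} (hc : H.Connected) : cc H 0 = 1 := by
  unfold cc
  rw [Finset.card_eq_one]
  refine ⟨∅, ?_⟩
  ext F
  simp only [mem_filter, mem_univ, true_and, Finset.card_eq_zero, mem_singleton]
  constructor
  · exact fun h => h.1
  · rintro rfl; exact ⟨rfl, by rw [sdiff_empty]; exact hc⟩



abbrev p01 : X := (1,0,0)
abbrev p02 : X := (0,1,0)
abbrev p03 : X := (1,1,0)
abbrev p12 : X := (0,0,1)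
abbrev p13 : X := (1,0,1)
abbrev p23 : X := (0,1,1)
abbrev z0 : X := (1,1,1)

theorem Ind_iff (i : ℕ) (hi : i ≤ 3) : ∀ A ∈ powersetCard i (univ : Finset X),
    (Ind A ↔ ((0 : X) ∉ A ∧ (i = 3 → ∑ u ∈ A, u ≠ 0))) := by
  intro A hA
  rw [mem_powersetCard] at hA
  constructor
  · intro h
    refine ⟨fun h0 => h {0} (by simpa using h0) (by simp) (by simp), fun h3 => h A (by simp) ?_⟩
    rintro rfl
    simp at hA; omega
  · rintro ⟨h0, h3⟩ B hB hne hs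
    rw [mem_powerset] at hB
    have hc := Finset.card_le_card hB
    have hp : 0 < B.card := Finset.card_pos.2 (Finset.nonempty_iff_ne_empty.2 hne)
    have : B.card = 1 ∨ B.card = 2 ∨ B.card = 3 := by omega
    rcases this with h | h | h
    · obtain ⟨b, rfl⟩ := Finset.card_eq_one.1 h
      rw [sum_singleton] at hs
      subst hs
      exact h0 (hB (by simp))
    · obtain ⟨b, c, hbc, rfl⟩ := Finset.card_eq_two.1 h
      rw [sum_pair hbc, CharTwo.add_eq_zero] at hs
      exact hbc hs
    · have : B = A := Finset.eq_of_subset_of_card_le hB (by omega)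
      subst this
      exact h3 (by omega) hs

theorem ev1 (N : X → ℕ) (hz : N z0 = 0) :
    ∑ A ∈ (powersetCard 1 (univ : Finset X)).filter Ind, ∏ u ∈ A, N u =
      N p01 + N p23 + N p02 + N p13 + N p03 + N p12 := by
  rw [Finset.filter_congr (Ind_iff 1 (by norm_num))]
  have h : ((powersetCard 1 (univ : Finset X)).filter fun A => ((0 : X) ∉ A ∧ (1 = 3 → ∑ u ∈ A, u ≠ 0))).val =
    Multiset.ofList [{z0}, {p03}, {p13}, {p01}, {p23}, {p02}, {p12}] := by decide +kernel
  rw [show ∀ (s : Finset (Finset X)) (f : Finset X → ℕ), s.sum f = (s.val.map f).sum from fun _ _ => rfl, h]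
  simp only [Multiset.map_coe, List.map, Multiset.sum_coe, List.sum_cons, List.sum_nil, prod_singleton, hz]
  ring

theorem pr2 (N : X → ℕ) (a b : X) (h : (decide (a ≠ b)) = true) : ∏ u ∈ ({a, b} : Finset X), N u = N a * N b := by
  rw [decide_eq_true_eq] at h
  rw [prod_pair h]

theorem pr3 (N : X → ℕ) (a b c : X) (h : (decide (a ≠ b ∧ a ≠ c ∧ b ≠ c)) = true) : ∏ u ∈ ({a, b, c} : Finset X), N u = N a * N b * N c := by
  rw [decide_eq_true_eq] at h
  rw [prod_insert (by simp [h.1, h.2.1]), prod_pair h.2.2, mul_assoc]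

theorem ev2 (N : X → ℕ) (hz : N z0 = 0) :
    ∑ A ∈ (powersetCard 2 (univ : Finset X)).filter Ind, ∏ u ∈ A, N u =
      E2f (N p01) (N p23) (N p02) (N p13) (N p03) (N p12) := by
  rw [Finset.filter_congr (Ind_iff 2 (by norm_num))]
  have h : ((powersetCard 2 (univ : Finset X)).filter fun A => ((0 : X) ∉ A ∧ (2 = 3 → ∑ u ∈ A, u ≠ 0))).val =
    Multiset.ofList [{p03, z0}, {p13, z0}, {p13, p03}, {p01, z0}, {p01, p03}, {p01, p13}, {p23, z0}, {p23, p03}, {p23, p13}, {p23, p01}, {p02, z0}, {p02, p03}, {p02, p13}, {p02, p01}, {p02, p23}, {p12, z0}, {p12, p03}, {p12, p13}, {p12, p01}, {p12, p23}, {p12, p02}] := by decide +kernel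
  rw [show ∀ (s : Finset (Finset X)) (f : Finset X → ℕ), s.sum f = (s.val.map f).sum from fun _ _ => rfl, h]
  simp only [Multiset.map_coe, List.map, Multiset.sum_coe, List.sum_cons, List.sum_nil]
  iterate 21 rw [pr2 _ _ _ (by decide)]
  simp only [hz, E2f]
  ring

theorem ev3 (N : X → ℕ) (hz : N z0 = 0) :
    ∑ A ∈ (powersetCard 3 (univ : Finset X)).filter Ind, ∏ u ∈ A, N u =
      Pf (N p01) (N p23) (N p02) (N p13) (N p03) (N p12) := by
  rw [Finset.filter_congr (Ind_iff 3 (by norm_num))]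
  have h : ((powersetCard 3 (univ : Finset X)).filter fun A => ((0 : X) ∉ A ∧ (3 = 3 → ∑ u ∈ A, u ≠ 0))).val =
    Multiset.ofList [{p13, p03, z0}, {p01, p03, z0}, {p01, p13, z0}, {p01, p13, p03}, {p23, p03, z0}, {p23, p13, z0}, {p23, p01, p03}, {p23, p01, p13}, {p02, p03, z0}, {p02, p13, p03}, {p02, p01, z0}, {p02, p01, p13}, {p02, p23, z0}, {p02, p23, p03}, {p02, p23, p13}, {p02, p23, p01}, {p12, p13, z0}, {p12, p13, p03}, {p12, p01, z0}, {p12, p01, p03}, {p12, p23, z0}, {p12, p23, p03}, {p12, p23, p13}, {p12, p23, p01}, {p12, p02, z0}, {p12, p02, p03}, {p12, p02, p13}, {p12, p02, p01}] := by decide +kernel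
  rw [show ∀ (s : Finset (Finset X)) (f : Finset X → ℕ), s.sum f = (s.val.map f).sum from fun _ _ => rfl, h]
  simp only [Multiset.map_coe, List.map, Multiset.sum_coe, List.sum_cons, List.sum_nil]
  iterate 28 rw [pr3 _ _ _ _ (by decide)]
  simp only [hz, Pf]
  ring



theorem cut_sum {H : Multigraph} {L} (h : Lab H L) (x : H.V → ZMod 2) :
    ∑ e ∈ univ.filter (fun e => dl H x e ≠ 0), lb L e = 0 := by
  rw [← lab_flow h x, Finset.sum_filter]
  refine Finset.sum_congr rfl fun e _ => ?_
  generalize dl H x e = t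
  have : t = 0 ∨ t = 1 := by revert t; decide
  rcases this with rfl | rfl <;> simp

theorem sum_inj_three {α : Type} (F : Finset α) (l : α → X) (hs : ∑ e ∈ F, l e = 0) (hne : F.Nonempty)
    (h0 : ∀ e ∈ F, l e ≠ 0) (hi : Set.InjOn l F) : 3 ≤ F.card := by
  have hp := Finset.card_pos.2 hne
  by_contra hc
  have : F.card = 1 ∨ F.card = 2 := by omega
  rcases this with h | h
  · obtain ⟨b, rfl⟩ := Finset.card_eq_one.1 h
    rw [sum_singleton] at hs
    exact h0 b (by simp) hs
  · obtain ⟨b, c, hbc, rfl⟩ := Finset.card_eq_two.1 h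
    rw [sum_pair hbc, CharTwo.add_eq_zero] at hs
    exact hbc (hi (by simp) (by simp) hs)

theorem fano {H : Multigraph} {L} (h : Lab H L) (n : ℕ) (hm : memG H n (n+2)) :
    ∃ z : X, z ≠ 0 ∧ NN L z = 0 := by
  by_contra hcon
  push Not at hcon
  have : ∀ z : X, ∃ e : H.E, z ≠ 0 → lb L e = z := by
    intro z
    by_cases hz : z = 0
    · subst hz
      obtain ⟨e, -⟩ := Finset.card_pos.1 (Nat.pos_of_ne_zero (hcon (1,0,0) (by decide)))
      exact ⟨e, fun k => absurd rfl k⟩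
    · obtain ⟨e, he⟩ := Finset.card_pos.1 (Nat.pos_of_ne_zero (hcon z hz))
      exact ⟨e, fun _ => (mem_filter.1 he).2⟩
  choose g hg using this
  obtain ⟨h1, h2, h3⟩ := hm
  set S : Finset H.E := (univ.erase (0 : X)).image g with hS
  have gi : Set.InjOn g (univ.erase (0 : X) : Finset X) := by
    intro a ha b hb hab
    have ha' : a ≠ 0 := by simpa using ha
    have hb' : b ≠ 0 := by simpa using hb
    rw [← hg a ha', ← hg b hb', hab]
  have hScard : S.card = 7 := by
    rw [hS, Finset.card_image_of_injOn gi, Finset.card_erase_of_mem (mem_univ _)]; rfl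
  have hS0 : ∀ e ∈ S, lb L e ≠ 0 := by
    intro e he
    obtain ⟨z, hz, rfl⟩ := mem_image.1 he
    have : z ≠ 0 := by simpa using hz
    rw [hg z this]; exact this
  have hSi : Set.InjOn (lb L) S := by
    intro e he f hf hef
    obtain ⟨z, hz, rfl⟩ := mem_image.1 he
    obtain ⟨y, hy, rfl⟩ := mem_image.1 hf
    rw [hg z (by simpa using hz), hg y (by simpa using hy)] at hef
    rw [hef]
  let r : H.V → H.V → Prop := fun u v => ∃ e, e ∉ S ∧ H.src e = u ∧ H.tgt e = v
  let Q := Quot r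
  -- restriction of dl to complement of S
  let T := {e : H.E // e ∉ S}
  let D : (H.V → ZMod 2) →ₗ[ZMod 2] (T → ZMod 2) := LinearMap.funLeft (ZMod 2) (ZMod 2) (fun t : T => t.1) ∘ₗ dl H
  let P : (Q → ZMod 2) →ₗ[ZMod 2] (H.V → ZMod 2) := LinearMap.funLeft (ZMod 2) (ZMod 2) (Quot.mk r)
  have hDP : LinearMap.ker D ≤ LinearMap.range P := by
    intro x hx
    refine ⟨Quot.lift x ?_, rfl⟩
    rintro u v ⟨e, he, rfl, rfl⟩
    rw [← dl_zero_iff]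
    exact congrFun hx ⟨e, he⟩
  have hPD : ∀ y : Q → ZMod 2, ∀ e, e ∉ S → dl H (P y) e = 0 := by
    intro y e he
    rw [dl_zero_iff]
    exact congrArg y (Quot.sound ⟨e, he, rfl, rfl⟩)
  have c1 := LinearMap.finrank_range_add_finrank_ker D
  have c2 := Submodule.finrank_le (LinearMap.range D)
  have c3 := Submodule.finrank_mono hDP
  have c4 := LinearMap.finrank_range_le P
  have c5 : Fintype.card T = n + 2 - 7 := by
    have : Fintype.card T = (univ \ S).card := by
      rw [← Fintype.card_coe]
      exact Fintype.card_congr (Equiv.subtypeEquivRight (by simp))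
    rw [this, Finset.card_sdiff_of_subset (subset_univ _), hScard, ← h2]; rfl
  have c6 : 7 ≤ n + 2 := by
    rw [← hScard, ← h2]; exact Finset.card_le_univ _
  simp only [Module.finrank_fintype_fun_eq_card] at c1 c2 c4
  have hnV : Fintype.card H.V = n := h1
  have hQ : 5 ≤ Fintype.card Q := by omega
  have hcut : ∀ q : Q, 3 ≤ (S.filter fun e => dl H (P (Pi.single q 1)) e ≠ 0).card := by
    intro q
    have hsub : (S.filter fun e => dl H (P (Pi.single q 1)) e ≠ 0) = univ.filter fun e => dl H (P (Pi.single q 1)) e ≠ 0 := by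
      ext e
      simp only [mem_filter, mem_univ, true_and, and_iff_right_iff_imp]
      intro he
      by_contra hc
      exact he (hPD _ e hc)
    refine sum_inj_three _ (lb L) (by rw [hsub]; exact cut_sum h _) ?_ (fun e he => hS0 e (mem_filter.1 he).1) ?_
    · rw [hsub]
      by_contra hne
      rw [Finset.not_nonempty_iff_eq_empty, Finset.filter_eq_empty_iff] at hne
      have hconst := (connOn_iff H univ).1 h3 (P (Pi.single q 1)) (fun e _ => by
        rw [← dl_zero_iff]; exact not_not.1 (hne (mem_univ e)))
      obtain ⟨q', hq'⟩ : ∃ q' : Q, q' ≠ q := by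
        have : Nontrivial Q := Fintype.one_lt_card_iff_nontrivial.1 (by omega)
        exact exists_ne q
      obtain ⟨u, rfl⟩ := Quot.exists_rep q
      obtain ⟨v, rfl⟩ := Quot.exists_rep q'
      have := hconst u v
      change (Pi.single (Quot.mk r u) 1 : Q → ZMod 2) (Quot.mk r u) = (Pi.single (Quot.mk r u) 1 : Q → ZMod 2) (Quot.mk r v) at this
      rw [Pi.single_eq_same, Pi.single_eq_of_ne hq'] at this
      exact absurd this (by decide)
    · intro a ha b hb; exact hSi (mem_filter.1 ha).1 (mem_filter.1 hb).1
  have hsum : ∑ q : Q, (S.filter fun e => dl H (P (Pi.single q 1)) e ≠ 0).card ≤ 14 := by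
    simp only [Finset.card_filter]
    rw [Finset.sum_comm]
    have : ∀ e ∈ S, ∑ q : Q, (if dl H (P (Pi.single q 1)) e ≠ 0 then 1 else 0) ≤ 2 := by
      intro e _
      rw [← Finset.card_filter]
      refine le_trans (Finset.card_le_card (t := {Quot.mk r (H.src e), Quot.mk r (H.tgt e)}) ?_) Finset.card_le_two
      intro q hq
      have hq := (mem_filter.1 hq).2
      by_contra hc
      simp only [mem_insert, mem_singleton, not_or] at hc
      apply hq
      change (Pi.single q 1 : Q → ZMod 2) (Quot.mk r (H.src e)) + (Pi.single q 1 : Q → ZMod 2) (Quot.mk r (H.tgt e)) = 0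
      rw [Pi.single_eq_of_ne (Ne.symm hc.1), Pi.single_eq_of_ne (Ne.symm hc.2)]; rfl
    refine le_trans (Finset.sum_le_sum this) ?_
    simp [hScard]
  have hge : ∑ q : Q, 3 ≤ ∑ q : Q, (S.filter fun e => dl H (P (Pi.single q 1)) e ≠ 0).card :=
    Finset.sum_le_sum fun q _ => hcut q
  simp only [sum_const, card_univ, smul_eq_mul] at hge
  omega

def ipX (f : X) : X →ₗ[ZMod 2] ZMod 2 where
  toFun x := f.1 * x.1 + f.2.1 * x.2.1 + f.2.2 * x.2.2
  map_add' x y := by simp; ring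
  map_smul' c x := by simp; ring

theorem move_z (z : X) (hz : z ≠ 0) : ∃ T : X ≃ₗ[ZMod 2] X, T z = z0 := by
  have : ∀ z : X, z ≠ 0 → ∃ f : X, f.1 * z.1 + f.2.1 * z.2.1 + f.2.2 * z.2.2 = 1 ∧
    f.1 * z0.1 + f.2.1 * z0.2.1 + f.2.2 * z0.2.2 = 1 := by decide
  obtain ⟨f, h1, h2⟩ := this z hz
  have h1 : ipX f z = 1 := h1
  have h2 : ipX f z0 = 1 := h2
  let T : X →ₗ[ZMod 2] X := LinearMap.id + (ipX f).smulRight (z0 + z)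
  have hT : ∀ x, T x = x + ipX f x • (z0 + z) := fun x => rfl
  have inv : Function.Involutive T := by
    intro x
    have e : ipX f (z0 + z) = 0 := by rw [map_add, h1, h2]; rfl
    rw [hT (T x), hT x, map_add, map_smul, e, smul_zero, add_zero, add_assoc, CharTwo.add_self_eq_zero, add_zero]
  refine ⟨LinearEquiv.ofInvolutive T inv, ?_⟩
  change T z = z0
  rw [hT, h1, one_smul, add_comm z0, ← add_assoc, CharTwo.add_self_eq_zero, zero_add]

theorem exists_lab' (H : Multigraph) (n : ℕ) (hn : 1 ≤ n) (h : memG H n (n+2)) :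
    ∃ L, Lab H L ∧ NN L z0 = 0 := by
  obtain ⟨L, hL⟩ := exists_lab H n hn h
  obtain ⟨z, hz, hN⟩ := fano hL n h
  obtain ⟨T, hT⟩ := move_z z hz
  refine ⟨T.toLinearMap ∘ₗ L, ?_, ?_⟩
  · unfold Lab; rw [LinearEquiv.ker_comp]; exact hL
  · rw [← hN]
    unfold NN
    congr 1
    ext e
    simp only [mem_filter, mem_univ, true_and]
    change T (lb L e) = z0 ↔ _
    rw [← hT]
    exact T.injective.eq_iff



def pp (i j : Fin 4) : X :=
  ![![0,p01,p02,p03],![p01,0,p12,p13],![p02,p12,0,p23],![p03,p13,p23,0]] i j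

/-- twice the optimal second coefficient -/
def S2 (m : ℕ) : ℤ := (m:ℤ)^2 + 6*((m/6:ℕ):ℤ)*(((m/6:ℕ):ℤ)+1) - (2*((m/6:ℕ):ℤ)+1)*m

theorem sumX (f : X → ℕ) : ∑ u, f u = f 0 + f z0 + (f p01 + f p23 + f p02 + f p13 + f p03 + f p12) := by
  rw [Fintype.sum_prod_type]
  simp only [Fintype.sum_prod_type]
  have : ∀ g : ZMod 2 → ℕ, ∑ t, g t = g 0 + g 1 := fun g => Fin.sum_univ_two g
  simp only [this]
  change _ = f (0,0,0) + _ + _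
  ring

theorem sumNN {H : Multigraph} (L : (H.E → ZMod 2) →ₗ[ZMod 2] X) : ∑ u, NN L u = H.nE := by
  unfold NN Multigraph.nE
  rw [← Finset.card_univ]
  exact (Finset.card_eq_sum_card_fiberwise (fun e _ => by simp)).symm

theorem E2f_mono (k a a' b b' c c' : ℕ) : E2f a a' b b' c c' ≤ E2f (a+k) a' b b' c c' := by
  unfold E2f; gcongr <;> omega

theorem Pf_mono (k a a' b b' c c' : ℕ) : Pf a a' b b' c c' ≤ Pf (a+k) a' b b' c c' := by
  unfold Pf; gcongr <;> omega

structure Good (H : Multigraph) (m : ℕ) (L : (H.E → ZMod 2) →ₗ[ZMod 2] X) : Prop where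
  conn : H.Connected
  nE : H.nE = m
  lab : Lab H L
  z : NN L z0 = 0

theorem Good.c1 {H m L} (h : Good H m L) : cc H 1 + NN L 0 = m := by
  rw [cc_eq h.lab h.conn, ev1 _ h.z]
  have := sumNN L
  rw [sumX, h.z, h.nE] at this
  omega

theorem Good.sum {H m L} (h : Good H m L) : NN L 0 + (NN L p01 + NN L p23 + NN L p02 + NN L p13 + NN L p03 + NN L p12) = m := by
  have := sumNN L
  rw [sumX, h.z, h.nE] at this
  omega

theorem Good.c2 {H m L} (h : Good H m L) : 2 * (cc H 2 : ℤ) ≤ S2 m := by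
  rw [cc_eq h.lab h.conn, ev2 _ h.z]
  have := h.sum
  have h2 := E2max (NN L p01 + NN L 0) (NN L p23) (NN L p02) (NN L p13) (NN L p03) (NN L p12) m (m/6) (by omega)
  have h3 := E2f_mono (NN L 0) (NN L p01) (NN L p23) (NN L p02) (NN L p13) (NN L p03) (NN L p12)
  unfold S2
  omega

theorem Good.c3 {H m L} (h : Good H m L) : cc H 3 ≤ Pstar (m/6) (m%6) := by
  rw [cc_eq h.lab h.conn, ev3 _ h.z]
  have := h.sum
  exact le_trans (Pf_mono (NN L 0) _ _ _ _ _ _)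
    (Pmax (NN L p01 + NN L 0) (NN L p23) (NN L p02) (NN L p13) (NN L p03) (NN L p12) (m/6) (m%6) (Nat.mod_lt _ (by norm_num)) (by omega))

/-- attains the optimum -/
def Opt (H : Multigraph) (m : ℕ) : Prop := cc H 1 = m ∧ 2 * (cc H 2 : ℤ) = S2 m ∧ cc H 3 = Pstar (m/6) (m%6)

theorem Good.N0 {H m L} (h : Good H m L) (ho : Opt H m) : NN L 0 = 0 := by
  have := h.c1; have := ho.1; omega

theorem bal_bool (x q : ℕ) (h : x = q ∨ x = q+1) : ∃ b, x = q + bn b := by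
  rcases h with h | h
  · exact ⟨false, by simpa [bn] using h⟩
  · exact ⟨true, by simpa [bn] using h⟩

theorem bn_le (b : Bool) : bn b ≤ 1 := by cases b <;> simp [bn]

theorem inj4 : ∀ s0 s1 s2 s3 : Fin 4, (s0 ≠ s1 ∧ s0 ≠ s2 ∧ s0 ≠ s3 ∧ s1 ≠ s2 ∧ s1 ≠ s3 ∧ s2 ≠ s3) →
    Function.Injective ![s0,s1,s2,s3] := by
  intro s0 s1 s2 s3 ⟨d1,d2,d3,d4,d5,d6⟩ i j hij
  match i, j with
  | 0, 0 | 1, 1 | 2, 2 | 3, 3 => rfl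
  | 0, 1 => exact absurd hij d1
  | 0, 2 => exact absurd hij d2
  | 0, 3 => exact absurd hij d3
  | 1, 2 => exact absurd hij d4
  | 1, 3 => exact absurd hij d5
  | 2, 3 => exact absurd hij d6
  | 1, 0 => exact absurd hij.symm d1
  | 2, 0 => exact absurd hij.symm d2
  | 3, 0 => exact absurd hij.symm d3
  | 2, 1 => exact absurd hij.symm d4
  | 3, 1 => exact absurd hij.symm d5
  | 3, 2 => exact absurd hij.symm d6

theorem Good.orbit {H m L} (h : Good H m L) (ho : Opt H m) (hm : 6 ≤ m) :
    ∃ s : Fin 4 → Fin 4, Function.Injective s ∧ ∀ i j, i < j →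
      NN L (pp (s i) (s j)) = m / 6 + bn (es (m % 6) i j) := by
  have hs := h.sum
  rw [h.N0 ho, zero_add] at hs
  have h2 := ho.2.1
  rw [cc_eq h.lab h.conn, ev2 _ h.z] at h2
  have h3 := ho.2.2
  rw [cc_eq h.lab h.conn, ev3 _ h.z] at h3
  have hb := E2eq _ _ _ _ _ _ m (m/6) hs h2
  obtain ⟨b1, b2, b3, b4, b5, b6⟩ := hb
  obtain ⟨a, ha⟩ := bal_bool _ _ b1
  obtain ⟨a', ha'⟩ := bal_bool _ _ b2
  obtain ⟨b, hb⟩ := bal_bool _ _ b3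
  obtain ⟨b', hb'⟩ := bal_bool _ _ b4
  obtain ⟨c, hc⟩ := bal_bool _ _ b5
  obtain ⟨c', hc'⟩ := bal_bool _ _ b6
  rw [ha, ha', hb, hb', hc, hc'] at h3 hs
  have hcnt : cntc a a' b b' c c' + 6 * (m/6) = m := by unfold cntc; omega
  have hlt : cntc a a' b b' c c' = m % 6 ∨ cntc a a' b b' c c' = 6 := by
    have := bn_le a; have := bn_le a'; have := bn_le b; have := bn_le b'; have := bn_le c; have := bn_le c'
    have : cntc a a' b b' c c' ≤ 6 := by unfold cntc; omega
    omega
  have hlt : cntc a a' b b' c c' = m % 6 := by omega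
  have hr : cntc a a' b b' c c' < 6 := by omega
  rw [← hlt] at h3 ⊢
  have ho' := Pbal_opp a a' b b' c c' (m/6) (by omega) hr h3
  obtain ⟨s0, s1, s2, s3, hd, hall⟩ := orb a a' b b' c c' hr ho'
  refine ⟨![s0,s1,s2,s3], ?_, ?_⟩
  · exact inj4 _ _ _ _ hd
  · intro i j hij
    rw [← hall i j hij]
    have hne : (![s0,s1,s2,s3] i) ≠ (![s0,s1,s2,s3] j) := fun k => hij.ne (inj4 _ _ _ _ hd k)
    generalize ![s0,s1,s2,s3] i = x at hne
    generalize ![s0,s1,s2,s3] j = y at hne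
    fin_cases x <;> fin_cases y <;> first | exact absurd rfl hne | assumption

theorem rel_lt {G H : Multigraph} {n : ℕ} (hn : 1 ≤ n) (hG : memG G n (n+2)) (hH : memG H n (n+2))
    (oG : Opt G (n+2)) (oH : ¬ Opt H (n+2)) (p : ℝ) (h0 : 0 < p) (h1 : p < 1) : H.rel p < G.rel p := by
  obtain ⟨L, hL, hz⟩ := exists_lab' H n hn hH
  have good : Good H (n+2) L := ⟨hH.2.2, hH.2.1, hL, hz⟩
  have k1 := good.c1
  have k2 := good.c2
  have k3 := good.c3
  obtain ⟨o1, o2, o3⟩ := oG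
  have le : ∀ i, cc H i ≤ cc G i := by
    intro i
    match i with
    | 0 => rw [cc0 hH.2.2, cc0 hG.2.2]
    | 1 => omega
    | 2 => omega
    | 3 => omega
    | i + 4 => rw [cc_zero_of H n hn hH _ (by omega)]; omega
  have lt : ∃ i ∈ range (n + 2 + 1), cc H i < cc G i := by
    by_contra hc
    push Not at hc
    apply oH
    have e1 := hc 1 (by simp)
    have e2 := hc 2 (by rw [mem_range]; omega)
    have e3 := hc 3 (by rw [mem_range]; omega)
    refine ⟨?_, ?_, ?_⟩ <;> [have := le 1; have := le 2; have := le 3] <;> omega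
  rw [rel_eq, rel_eq, hG.2.1, hH.2.1]
  refine Finset.sum_lt_sum ?_ ?_
  · intro i _
    have : 0 < p ^ (n + 2 - i) * (1 - p) ^ i := by
      have : 0 < 1 - p := by linarith
      positivity
    have := le i
    gcongr
  · obtain ⟨i, hi, hlt⟩ := lt
    refine ⟨i, hi, ?_⟩
    have : 0 < p ^ (n + 2 - i) * (1 - p) ^ i := by
      have : 0 < 1 - p := by linarith
      positivity
    gcongr



def kE (i j : Fin 4) (h : i < j) : K4.E := ⟨(i, j), h⟩
abbrev e01 : K4.E := kE 0 1 (by decide)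
abbrev e02 : K4.E := kE 0 2 (by decide)
abbrev e03 : K4.E := kE 0 3 (by decide)
abbrev e12 : K4.E := kE 1 2 (by decide)
abbrev e13 : K4.E := kE 1 3 (by decide)
abbrev e23 : K4.E := kE 2 3 (by decide)

theorem k4cases (P : K4.E → Prop) (h1 : P e01) (h2 : P e02) (h3 : P e03) (h4 : P e12) (h5 : P e13) (h6 : P e23) :
    ∀ e, P e := by
  rintro ⟨⟨i, j⟩, h⟩
  have hc : (i, j) = (0, 1) ∨ (i, j) = (0, 2) ∨ (i, j) = (0, 3) ∨ (i, j) = (1, 2) ∨ (i, j) = (1, 3) ∨ (i, j) = (2, 3) := by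
    have h' : i < j := h
    clear h
    revert i j
    decide
  rcases hc with k | k | k | k | k | k <;> cases k
  · exact h1
  · exact h2
  · exact h3
  · exact h4
  · exact h5
  · exact h6

theorem univK4 : (univ : Finset K4.E) = {e01, e23, e02, e13, e03, e12} := by
  symm
  rw [Finset.eq_univ_iff_forall]
  refine k4cases _ ?_ ?_ ?_ ?_ ?_ ?_ <;> simp

theorem kE_ne {i j k l : Fin 4} {h : i < j} {h' : k < l} (hne : (i, j) ≠ (k, l)) : kE i j h ≠ kE k l h' := fun h =>
  hne (congrArg Subtype.val h)

theorem sumK4 {M : Type} [AddCommMonoid M] (g : K4.E → M) :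
    ∑ e : K4.E, g e = g e01 + (g e23 + (g e02 + (g e13 + (g e03 + g e12)))) := by
  rw [univK4]
  rw [sum_insert, sum_insert, sum_insert, sum_insert, sum_insert, sum_singleton]
  all_goals simp only [mem_insert, mem_singleton, not_or]
  all_goals repeat' apply And.intro
  all_goals exact kE_ne (by decide)

def Pe (e : K4.E) : X := pp e.1.1 e.1.2

def PfW (w : K4.E → ℕ) : ℕ := Pf (w e01) (w e23) (w e02) (w e13) (w e03) (w e12)

section
variable (w : K4.E → ℕ)

theorem sub_nE : (subdivide K4 w).nE = ∑ e, w e := by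
  unfold Multigraph.nE
  change Fintype.card (Σ f : K4.E, Fin (w f)) = _
  simp

theorem sub_nV (hz : ZeroAcyclic K4 w) : (subdivide K4 w).nV + 2 = ∑ e, w e := by
  unfold Multigraph.nV
  change Fintype.card (Quot (zeroRel K4 w) ⊕ (Σ f : K4.E, Fin (w f - 1))) + 2 = _
  unfold ZeroAcyclic at hz
  have h4 : Fintype.card K4.V = 4 := rfl
  rw [h4] at hz
  rw [Fintype.card_sum, Fintype.card_sigma]
  simp only [Fintype.card_fin]
  rw [Finset.card_filter] at hz
  have : ∑ e : K4.E, (w e - 1) + 6 = ∑ e : K4.E, w e + ∑ e : K4.E, (if w e = 0 then 1 else 0) := by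
    rw [← Finset.sum_add_distrib]
    have h6 : 6 = ∑ e : K4.E, 1 := (sumK4 (fun _ => 1)).symm
    rw [h6, ← Finset.sum_add_distrib]
    refine Finset.sum_congr rfl fun e _ => ?_
    split_ifs <;> omega
  omega

theorem node_zero (e : K4.E) : chainNode K4 w e 0 = Sum.inl (Quot.mk _ (K4.src e)) := by
  simp [chainNode]

theorem node_end (e : K4.E) : chainNode K4 w e (w e) = Sum.inl (Quot.mk _ (K4.tgt e)) := by
  by_cases h : w e = 0
  · rw [h, node_zero]
    exact congrArg Sum.inl (Quot.sound ⟨e, h, rfl, rfl⟩)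
  · simp [chainNode, h]

theorem node_mid (e : K4.E) (i : Fin (w e - 1)) : chainNode K4 w e (i.1 + 1) = Sum.inr ⟨e, i⟩ := by
  have : 0 < i.1 + 1 ∧ i.1 + 1 < w e := by omega
  simp [chainNode, this]

theorem sub_conn : (subdivide K4 w).Connected := by
  refine (connOn_iff _ _).2 ?_
  intro x hx
  have h1 : ∀ (e : K4.E) (j : ℕ), j ≤ w e → x (chainNode K4 w e j) = x (Sum.inl (Quot.mk _ (K4.src e))) := by
    intro e j
    induction j with
    | zero => intro _; rw [node_zero]
    | succ j ih =>
      intro hj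
      rw [← ih (by omega)]
      exact (hx ⟨e, ⟨j, hj⟩⟩ (mem_univ _)).symm
  have h2 : ∀ e : K4.E, x (Sum.inl (Quot.mk _ (K4.tgt e))) = x (Sum.inl (Quot.mk _ (K4.src e))) := by
    intro e
    rw [← h1 e (w e) le_rfl, node_end]
  have h3 : ∀ v : K4.V, x (Sum.inl (Quot.mk _ v)) = x (Sum.inl (Quot.mk _ (0 : Fin 4))) := by
    intro v
    revert v
    change ∀ v : Fin 4, _
    intro v
    match v with
    | 0 => rfl
    | 1 => exact h2 e01
    | 2 => exact h2 e02
    | 3 => exact h2 e03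
  have h4 : ∀ v, x v = x (Sum.inl (Quot.mk _ (0 : Fin 4))) := by
    rintro (q | ⟨f, i⟩)
    · obtain ⟨v, rfl⟩ := Quot.exists_rep q
      exact h3 v
    · rw [← node_mid, h1 f _ (by omega)]
      exact h3 _
  intro u v
  rw [h4 u, h4 v]

def Lsub : ((subdivide K4 w).E → ZMod 2) →ₗ[ZMod 2] X :=
  ∑ f : (subdivide K4 w).E, (LinearMap.proj f : ((subdivide K4 w).E → ZMod 2) →ₗ[ZMod 2] ZMod 2).smulRight (Pe f.1)

theorem Lsub_apply (y) : Lsub w y = ∑ f, y f • Pe f.1 := by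
  simp [Lsub, LinearMap.sum_apply]

theorem lb_Lsub (f) : lb (Lsub w) f = Pe f.1 := by
  unfold lb
  rw [Lsub_apply]
  rw [Finset.sum_eq_single f]
  · rw [Pi.single_eq_same, one_smul]
  · intro g _ hg
    rw [Pi.single_eq_of_ne hg, zero_smul]
  · simp

theorem NN_Lsub (u : X) : NN (Lsub w) u = ∑ e : K4.E, if Pe e = u then w e else 0 := by
  unfold NN
  simp only [lb_Lsub]
  rw [Finset.card_filter]
  change ∑ f : (Σ f : K4.E, Fin (w f)), (if Pe f.1 = u then 1 else 0) = _
  rw [Fintype.sum_sigma]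
  refine Finset.sum_congr rfl fun e _ => ?_
  split_ifs <;> simp

theorem NN_all : NN (Lsub w) 0 = 0 ∧ NN (Lsub w) z0 = 0 ∧ NN (Lsub w) p01 = w e01 ∧ NN (Lsub w) p23 = w e23 ∧
    NN (Lsub w) p02 = w e02 ∧ NN (Lsub w) p13 = w e13 ∧ NN (Lsub w) p03 = w e03 ∧ NN (Lsub w) p12 = w e12 := by
  have a1 : Pe e01 = p01 := rfl
  have a2 : Pe e02 = p02 := rfl
  have a3 : Pe e03 = p03 := rfl
  have a4 : Pe e12 = p12 := rfl
  have a5 : Pe e13 = p13 := rfl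
  have a6 : Pe e23 = p23 := rfl
  simp only [NN_Lsub, sumK4, a1, a2, a3, a4, a5, a6]
  refine ⟨?_, ?_, ?_, ?_, ?_, ?_, ?_, ?_⟩ <;> simp [p01, p02, p03, p12, p13, p23, z0, Prod.ext_iff]

theorem flow_K4 (y : Fin 4 → ZMod 2) : ∑ e : K4.E, (y (K4.src e) + y (K4.tgt e)) • Pe e = 0 := by
  rw [sumK4]
  change (y 0 + y 1) • p01 + ((y 2 + y 3) • p23 + ((y 0 + y 2) • p02 + ((y 1 + y 3) • p13 + ((y 0 + y 3) • p03 + (y 1 + y 2) • p12)))) = 0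
  generalize y 0 = a
  generalize y 1 = b
  generalize y 2 = c
  generalize y 3 = d
  revert a b c d
  decide

theorem Lsub_dl (x) : Lsub w (dl _ x) = 0 := by
  rw [Lsub_apply, ← flow_K4 (fun v => x (Sum.inl (Quot.mk _ v)))]
  change ∑ f : (Σ f : K4.E, Fin (w f)), _ = _
  rw [Fintype.sum_sigma]
  refine Finset.sum_congr rfl fun e _ => ?_
  change ∑ i : Fin (w e), (x (chainNode K4 w e i) + x (chainNode K4 w e (i + 1))) • Pe e = _
  rw [← Finset.sum_smul]
  congr 1
  rw [← node_zero, ← node_end]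
  rw [Fin.sum_univ_eq_sum_range (fun i => x (chainNode K4 w e i) + x (chainNode K4 w e (i + 1)))]
  generalize w e = k at *
  induction k with
  | zero => simp [CharTwo.add_self_eq_zero]
  | succ k ih =>
    rw [Finset.sum_range_succ, ih]
    generalize x (chainNode K4 w e 0) = a
    generalize x (chainNode K4 w e k) = b
    generalize x (chainNode K4 w e (k+1)) = c
    revert a b c; decide

theorem Lsub_surj (hP : 0 < PfW w) : LinearMap.range (Lsub w) = ⊤ := by
  by_contra hne
  obtain ⟨f, hf, hle⟩ := Submodule.exists_le_ker_of_lt_top _ (lt_top_iff_ne_top.2 hne)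
  have key : ∀ e : K4.E, w e = 0 ∨ f (Pe e) = 0 := by
    intro e
    by_cases h : w e = 0
    · exact Or.inl h
    · right
      have : Pe e ∈ LinearMap.range (Lsub w) := ⟨Pi.single ⟨e, ⟨0, Nat.pos_of_ne_zero h⟩⟩ 1, lb_Lsub w ⟨e, ⟨0, Nat.pos_of_ne_zero h⟩⟩⟩
      exact hle this
  have k1 : w e01 = 0 ∨ f p01 = 0 := key e01
  have k2 : w e02 = 0 ∨ f p02 = 0 := key e02
  have k3 : w e03 = 0 ∨ f p03 = 0 := key e03
  have k4 : w e12 = 0 ∨ f p12 = 0 := key e12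
  have k5 : w e13 = 0 ∨ f p13 = 0 := key e13
  have k6 : w e23 = 0 ∨ f p23 = 0 := key e23
  have s1 : p03 = p01 + p02 := by decide
  have s2 : p13 = p01 + p12 := by decide
  have s3 : p23 = p02 + p12 := by decide
  rw [s1, map_add] at k3
  rw [s2, map_add] at k5
  rw [s3, map_add] at k6
  have hnz : ¬ (f p01 = 0 ∧ f p02 = 0 ∧ f p12 = 0) := by
    rintro ⟨a, b, c⟩
    apply hf
    refine LinearMap.ext fun u => ?_
    have : u = u.1 • p01 + u.2.1 • p02 + u.2.2 • p12 := by revert u; decide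
    rw [this, map_add, map_add, map_smul, map_smul, map_smul, a, b, c]
    simp
  unfold PfW Pf at hP
  generalize f p01 = x at *
  generalize f p02 = y at *
  generalize f p12 = z at *
  have h2 : ∀ x : ZMod 2, x = 0 ∨ x = 1 := by decide
  have hx := h2 x
  have hy := h2 y
  have hz := h2 z
  clear h2
  have two : (1 : ZMod 2) + 1 = 0 := by decide
  rcases hx with rfl | rfl <;> rcases hy with rfl | rfl <;> rcases hz with rfl | rfl <;>
    simp [two] at * <;> simp_all

theorem sub_lab (hz : ZeroAcyclic K4 w) (hP : 0 < PfW w) : Lab (subdivide K4 w) (Lsub w) := by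
  unfold Lab
  symm
  refine Submodule.eq_of_le_of_finrank_eq ?_ ?_
  · rintro _ ⟨x, rfl⟩
    exact Lsub_dl w x
  · have h1 := dl_finrank _ (sub_conn w) ⟨Sum.inl (Quot.mk _ (0 : Fin 4))⟩
    have h2 := LinearMap.finrank_range_add_finrank_ker (Lsub w)
    rw [Lsub_surj w hP, finrank_top, finrankX, Module.finrank_fintype_fun_eq_card] at h2
    have h3 := sub_nV w hz
    have h4 := sub_nE w
    unfold Multigraph.nE at h4
    omega

theorem sub_good (hz : ZeroAcyclic K4 w) (hP : 0 < PfW w) : Good (subdivide K4 w) (∑ e, w e) (Lsub w) :=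
  ⟨sub_conn w, sub_nE w, sub_lab w hz hP, (NN_all w).2.1⟩

theorem sub_memG (n : ℕ) (hz : ZeroAcyclic K4 w) (hs : ∑ e, w e = n + 2) : memG (subdivide K4 w) n (n+2) :=
  ⟨by have := sub_nV w hz; omega, by rw [sub_nE, hs], sub_conn w⟩

theorem sub_cc (hz : ZeroAcyclic K4 w) (hP : 0 < PfW w) : cc (subdivide K4 w) 1 = ∑ e, w e ∧
    cc (subdivide K4 w) 2 = E2f (w e01) (w e23) (w e02) (w e13) (w e03) (w e12) ∧ cc (subdivide K4 w) 3 = PfW w := by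
  have g := sub_good w hz hP
  obtain ⟨n1, n2, n3, n4, n5, n6, n7, n8⟩ := NN_all w
  refine ⟨?_, ?_, ?_⟩
  · have := g.c1; rw [n1] at this; exact this
  · rw [cc_eq g.lab g.conn, ev2 _ g.z, n3, n4, n5, n6, n7, n8]
  · rw [cc_eq g.lab g.conn, ev3 _ g.z, n3, n4, n5, n6, n7, n8]; rfl

end



theorem bal_q (w : K4.E → ℕ) (hb : BalancedWeights w) (m : ℕ) (hs : ∑ e, w e = m) :
    ∃ B : K4.E → Bool, (∀ e, w e = m / 6 + bn (B e)) ∧ (∑ e, bn (B e)) = m % 6 := by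
  obtain ⟨e0, -, he0⟩ := Finset.exists_min_image (univ : Finset K4.E) w ⟨e01, mem_univ _⟩
  have h1 : ∀ e, w e = w e0 + bn (decide (w e ≠ w e0)) := by
    intro e
    have := he0 e (mem_univ _)
    have := hb e e0
    by_cases h : w e = w e0
    · simp [h, bn]
    · simp [h, bn]; omega
  have h2 : ∑ e, w e = 6 * w e0 + ∑ e, bn (decide (w e ≠ w e0)) := by
    rw [Finset.sum_congr rfl fun e _ => h1 e, Finset.sum_add_distrib]
    congr 1
    rw [sumK4]; omega
  have h3 : ∑ e, bn (decide (w e ≠ w e0)) < 6 := by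
    have h6 : 6 = ∑ e : K4.E, 1 := (sumK4 (fun _ => 1)).symm
    rw [h6]
    refine Finset.sum_lt_sum (fun e _ => bn_le _) ⟨e0, mem_univ _, ?_⟩
    simp [bn]
  have hq : m / 6 = w e0 := by omega
  refine ⟨fun e => decide (w e ≠ w e0), fun e => by rw [hq]; exact h1 e, ?_⟩
  change ∑ e, bn (decide (w e ≠ w e0)) = _
  omega

def d0 (b01 b23 b02 b13 b03 b12 : Bool) : ℕ := bn b01 + bn b02 + bn b03
def d1 (b01 b23 b02 b13 b03 b12 : Bool) : ℕ := bn b01 + bn b12 + bn b13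
def d2 (b01 b23 b02 b13 b03 b12 : Bool) : ℕ := bn b02 + bn b12 + bn b23
def d3 (b01 b23 b02 b13 b03 b12 : Bool) : ℕ := bn b03 + bn b13 + bn b23

theorem degIn_eq (S : Finset K4.E) (B : K4.E → Bool) (h : ∀ e, e ∈ S ↔ B e = true) :
    degIn K4 S (0 : Fin 4) = d0 (B e01) (B e23) (B e02) (B e13) (B e03) (B e12) ∧
    degIn K4 S (1 : Fin 4) = d1 (B e01) (B e23) (B e02) (B e13) (B e03) (B e12) ∧
    degIn K4 S (2 : Fin 4) = d2 (B e01) (B e23) (B e02) (B e13) (B e03) (B e12) ∧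
    degIn K4 S (3 : Fin 4) = d3 (B e01) (B e23) (B e02) (B e13) (B e03) (B e12) := by
  have hS : S = univ.filter fun e => B e = true := by ext e; simp [h]
  have key : ∀ v : Fin 4, degIn K4 S v = ∑ e : K4.E, bn (B e) * ((if (e.1.1 : Fin 4) = v then 1 else 0) + (if (e.1.2 : Fin 4) = v then 1 else 0)) := by
    intro v
    unfold degIn
    rw [hS, Finset.filter_filter, Finset.filter_filter, Finset.card_filter, Finset.card_filter, ← Finset.sum_add_distrib]
    refine Finset.sum_congr rfl fun e _ => ?_
    have a1 : (K4.src e = v) = ((e.1.1 : Fin 4) = v) := rfl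
    have a2 : (K4.tgt e = v) = ((e.1.2 : Fin 4) = v) := rfl
    simp only [a1, a2]
    cases B e <;> by_cases h1 : (e.1.1 : Fin 4) = v <;> by_cases h2 : (e.1.2 : Fin 4) = v <;> simp [bn, h1, h2]
  simp only [key, sumK4]
  simp [kE, d0, d1, d2, d3]
  omega

def nb (b : Bool) : Bool := !b

def kc (a a' b b' c c' : Bool) : Prop :=
  (cntc a a' b b' c c' = 2 → d0 a a' b b' c c' ≤ 1 ∧ d1 a a' b b' c c' ≤ 1 ∧ d2 a a' b b' c c' ≤ 1 ∧ d3 a a' b b' c c' ≤ 1) ∧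
  (cntc a a' b b' c c' = 4 → d0 (!a) (!a') (!b) (!b') (!c) (!c') ≤ 1 ∧ d1 (!a) (!a') (!b) (!b') (!c) (!c') ≤ 1 ∧
    d2 (!a) (!a') (!b) (!b') (!c) (!c') ≤ 1 ∧ d3 (!a) (!a') (!b) (!b') (!c) (!c') ≤ 1) ∧
  (cntc a a' b b' c c' = 3 → cntc a a' b b' c c' = 3 ∧
    (d0 a a' b b' c c' ≤ 2 ∧ d1 a a' b b' c c' ≤ 2 ∧ d2 a a' b b' c c' ≤ 2 ∧ d3 a a' b b' c c' ≤ 2) ∧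
    (if d0 a a' b b' c c' = 1 then 1 else 0) + (if d1 a a' b b' c c' = 1 then 1 else 0) +
     (if d2 a a' b b' c c' = 1 then 1 else 0) + (if d3 a a' b b' c c' = 1 then 1 else 0) = 2)

instance (a a' b b' c c' : Bool) : Decidable (kc a a' b b' c c') := by unfold kc; infer_instance

theorem kc_iff : ∀ a a' b b' c c' : Bool, cntc a a' b b' c c' < 6 →
    (kc a a' b b' c c' ↔ oppc a a' b b' c c' = Oc (cntc a a' b b' c c')) := by
  decide +kernel

theorem forall_fin4 (P : Fin 4 → Prop) : (∀ v, P v) ↔ P 0 ∧ P 1 ∧ P 2 ∧ P 3 := by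
  constructor
  · intro h; exact ⟨h 0, h 1, h 2, h 3⟩
  · rintro ⟨a, b, c, d⟩ v
    match v with
    | 0 => exact a
    | 1 => exact b
    | 2 => exact c
    | 3 => exact d

theorem match_iff (S : Finset K4.E) (B : K4.E → Bool) (h : ∀ e, e ∈ S ↔ B e = true) :
    IsMatchingIn K4 S ↔ d0 (B e01) (B e23) (B e02) (B e13) (B e03) (B e12) ≤ 1 ∧
     d1 (B e01) (B e23) (B e02) (B e13) (B e03) (B e12) ≤ 1 ∧ d2 (B e01) (B e23) (B e02) (B e13) (B e03) (B e12) ≤ 1 ∧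
     d3 (B e01) (B e23) (B e02) (B e13) (B e03) (B e12) ≤ 1 := by
  obtain ⟨h0, h1, h2, h3⟩ := degIn_eq S B h
  rw [← h0, ← h1, ← h2, ← h3]
  exact forall_fin4 _

theorem path_iff (S : Finset K4.E) (B : K4.E → Bool) (h : ∀ e, e ∈ S ↔ B e = true) :
    IsPath3In K4 S ↔ cntc (B e01) (B e23) (B e02) (B e13) (B e03) (B e12) = 3 ∧
     (d0 (B e01) (B e23) (B e02) (B e13) (B e03) (B e12) ≤ 2 ∧
     d1 (B e01) (B e23) (B e02) (B e13) (B e03) (B e12) ≤ 2 ∧ d2 (B e01) (B e23) (B e02) (B e13) (B e03) (B e12) ≤ 2 ∧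
     d3 (B e01) (B e23) (B e02) (B e13) (B e03) (B e12) ≤ 2) ∧
    (if d0 (B e01) (B e23) (B e02) (B e13) (B e03) (B e12) = 1 then 1 else 0) + (if d1 (B e01) (B e23) (B e02) (B e13) (B e03) (B e12) = 1 then 1 else 0) +
     (if d2 (B e01) (B e23) (B e02) (B e13) (B e03) (B e12) = 1 then 1 else 0) + (if d3 (B e01) (B e23) (B e02) (B e13) (B e03) (B e12) = 1 then 1 else 0) = 2 := by
  obtain ⟨h0, h1, h2, h3⟩ := degIn_eq S B h
  rw [← h0, ← h1, ← h2, ← h3]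
  unfold IsPath3In
  have hc : S.card = cntc (B e01) (B e23) (B e02) (B e13) (B e03) (B e12) := by
    have hS : S = univ.filter fun e => B e = true := by ext e; simp [h]
    rw [hS, Finset.card_filter, sumK4]
    unfold cntc bn
    ring
  have hd : (Finset.univ.filter fun v : K4.V => degIn K4 S v = 1).card =
      (if degIn K4 S (0 : Fin 4) = 1 then 1 else 0) + (if degIn K4 S (1 : Fin 4) = 1 then 1 else 0) +
      (if degIn K4 S (2 : Fin 4) = 1 then 1 else 0) + (if degIn K4 S (3 : Fin 4) = 1 then 1 else 0) := by
    rw [Finset.card_filter]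
    exact Fin.sum_univ_four (fun v => if degIn K4 S v = 1 then 1 else 0)
  rw [hc, hd]
  exact and_congr_right fun _ => and_congr_left fun _ => forall_fin4 _

theorem cnt_sum (B : K4.E → Bool) : ∑ e, bn (B e) = cntc (B e01) (B e23) (B e02) (B e13) (B e03) (B e12) := by
  rw [sumK4]; unfold cntc; ring

theorem k4Cond_iff (w : K4.E → ℕ) (B : K4.E → Bool) (m : ℕ) (hw : ∀ e, w e = m / 6 + bn (B e))
    (hB : ∑ e, bn (B e) = m % 6) :
    k4Cond m w ↔ oppc (B e01) (B e23) (B e02) (B e13) (B e03) (B e12) = Oc (m % 6) := by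
  have hc := hB
  rw [cnt_sum] at hc
  rw [← hc, ← kc_iff _ _ _ _ _ _ (by rw [hc]; exact Nat.mod_lt _ (by norm_num))]
  unfold k4Cond kc
  have hmax : 0 < m % 6 → ∀ e, e ∈ maxChains K4 w ↔ B e = true := by
    intro h0 e
    rw [← hB] at h0
    obtain ⟨f, -, hf⟩ := Finset.exists_ne_zero_of_sum_ne_zero h0.ne'
    simp only [maxChains, mem_filter, mem_univ, true_and, hw]
    constructor
    · intro h
      have := h f
      by_contra hc
      simp [hc, bn] at this hf
      simp [hf] at this
    · intro h f
      have := bn_le (B f)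
      simp [h, bn]
      simp [bn] at this; omega
  have hmin : m % 6 < 6 → ∀ e, e ∈ minChains K4 w ↔ (fun e => !(B e)) e = true := by
    intro h0 e
    rw [← hB] at h0
    have : ∃ f, B f = false := by
      by_contra hcon
      push Not at hcon
      have : ∑ e, bn (B e) = ∑ e : K4.E, 1 := Finset.sum_congr rfl fun e _ => by
        have := hcon e; simp at this; simp [this, bn]
      rw [this, sumK4] at h0
      omega
    obtain ⟨f, hf⟩ := this
    simp only [minChains, mem_filter, mem_univ, true_and, hw]
    constructor
    · intro h
      have := h f
      by_contra hc
      simp at hc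
      simp [hc, hf, bn] at this
    · intro h f
      simp at h
      simp [h, bn]
  refine and_congr ?_ (and_congr ?_ ?_)
  · rw [hc]
    exact imp_congr_right fun hr => match_iff _ B (hmax (by omega))
  · rw [hc]
    exact imp_congr_right fun hr => match_iff _ _ (hmin (by omega))
  · rw [hc]
    refine imp_congr_right fun hr => ?_
    rw [← hc]
    exact path_iff _ B (hmax (by omega))

theorem Pstar_pos (m : ℕ) (h : 3 ≤ m) : 0 < Pstar (m/6) (m%6) := by
  unfold Pstar
  by_cases hq : m / 6 = 0
  · have : m % 6 = 3 ∨ m % 6 = 4 ∨ m % 6 = 5 := by omega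
    rcases this with k | k | k <;> rw [k] <;> simp [Cc]
  · have : 0 < m / 6 := Nat.pos_of_ne_zero hq
    positivity

theorem sub_opt (w : K4.E → ℕ) (m : ℕ) (hm : 3 ≤ m) (hz : ZeroAcyclic K4 w) (hb : BalancedWeights w)
    (hs : ∑ e, w e = m) (hk : k4Cond m w) : Opt (subdivide K4 w) m ∧ 0 < PfW w := by
  obtain ⟨B, hw, hB⟩ := bal_q w hb m hs
  rw [k4Cond_iff w B m hw hB] at hk
  have hc := hB
  rw [cnt_sum] at hc
  have hP : PfW w = Pstar (m/6) (m%6) := by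
    unfold PfW
    rw [← hc] at hk ⊢
    simp only [hw]
    exact Pbal_opt _ _ _ _ _ _ _ (by rw [hc]; exact Nat.mod_lt _ (by norm_num)) hk
  have hpos : 0 < PfW w := by rw [hP]; exact Pstar_pos m hm
  obtain ⟨c1, c2, c3⟩ := sub_cc w hz hpos
  refine ⟨⟨by rw [c1, hs], ?_, by rw [c3, hP]⟩, hpos⟩
  rw [c2]
  have h2 : ∀ e, w e = m/6 ∨ w e = m/6+1 := by
    intro e; have := hw e; have := bn_le (B e); omega
  refine E2bal _ _ _ _ _ _ m (m/6) ?_ ⟨h2 _, h2 _, h2 _, h2 _, h2 _, h2 _⟩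
  rw [← hs, sumK4]; ring

def wst (m : ℕ) : K4.E → ℕ := fun e => m / 6 + bn (es (m % 6) e.1.1 e.1.2)

theorem es_facts : ∀ r < 6, (∑ e : K4.E, bn (es r e.1.1 e.1.2)) = r ∧
    oppc (es r 0 1) (es r 2 3) (es r 0 2) (es r 1 3) (es r 0 3) (es r 1 2) = Oc r := by
  intro r hr
  rw [sumK4]
  change bn (es r 0 1) + (bn (es r 2 3) + (bn (es r 0 2) + (bn (es r 1 3) + (bn (es r 0 3) + bn (es r 1 2))))) = r ∧ _
  revert r
  decide

theorem wst_sum (m : ℕ) : ∑ e, wst m e = m := by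
  unfold wst
  rw [Finset.sum_add_distrib, (es_facts (m%6) (Nat.mod_lt _ (by norm_num))).1, sumK4]
  omega

theorem wst_cond (m : ℕ) : k4Cond m (wst m) := by
  have h := es_facts (m%6) (Nat.mod_lt _ (by norm_num))
  rw [k4Cond_iff (wst m) (fun e => es (m % 6) e.1.1 e.1.2) m (fun e => rfl) h.1]
  exact h.2

theorem wst_bal (m : ℕ) : BalancedWeights (wst m) := by
  intro e f
  unfold wst
  have := bn_le (es (m % 6) e.1.1 e.1.2)
  omega

theorem za_of (w : K4.E → ℕ) (k : ℕ) (f : Fin 4 → Fin k) (g : Fin k → Fin 4) (hf : ∀ e : K4.E, w e = 0 → f e.1.1 = f e.1.2)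
    (hfg : ∀ i, f (g i) = i) (hg : ∀ v : Fin 4, (Quot.mk (zeroRel K4 w) (g (f v)) : Quot (zeroRel K4 w)) = Quot.mk _ v)
    (hk : k + (∑ e : K4.E, if w e = 0 then 1 else 0) = 4) : ZeroAcyclic K4 w := by
  unfold ZeroAcyclic
  have h4 : Fintype.card K4.V = 4 := rfl
  rw [h4, Finset.card_filter, ← hk]
  congr 1
  have : Quot (zeroRel K4 w) ≃ Fin k :=
    { toFun := Quot.lift f (by rintro _ _ ⟨e, he, rfl, rfl⟩; exact hf e he)
      invFun := fun i => Quot.mk _ (g i)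
      left_inv := by
        intro q
        obtain ⟨v, rfl⟩ := Quot.exists_rep q
        exact hg v
      right_inv := fun i => hfg i }
  rw [Fintype.card_congr this, Fintype.card_fin]

theorem qs (w : K4.E → ℕ) (i j : Fin 4) (h : i < j) (hw : w (kE i j h) = 0) :
    (Quot.mk (zeroRel K4 w) i : Quot (zeroRel K4 w)) = Quot.mk _ j := Quot.sound ⟨kE i j h, hw, rfl, rfl⟩

theorem wst_za (m : ℕ) (hm : 3 ≤ m) : ZeroAcyclic K4 (wst m) := by
  by_cases hq : 6 ≤ m
  · have hp : ∀ e, wst m e ≠ 0 := fun e => by unfold wst; omega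
    refine za_of _ 4 id id (fun e he => absurd he (hp e)) (fun _ => rfl) (fun _ => rfl) ?_
    simp [hp]
  · have : m = 3 ∨ m = 4 ∨ m = 5 := by omega
    rcases this with rfl | rfl | rfl
    · refine za_of _ 1 (fun _ => 0) (fun _ => 0) (fun _ _ => rfl) (fun i => by omega) ?_ (by rw [sumK4]; rfl)
      have q02 := qs (wst 3) 0 2 (by decide) rfl
      have q03 := qs (wst 3) 0 3 (by decide) rfl
      have q13 := qs (wst 3) 1 3 (by decide) rfl
      rw [forall_fin4]
      exact ⟨rfl, q03.trans q13.symm, q02, q03⟩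
    · refine za_of _ 2 ![0,0,1,1] ![0,2] ?_ (by decide) ?_ (by rw [sumK4]; rfl)
      · refine k4cases _ ?_ ?_ ?_ ?_ ?_ ?_
        · intro _; rfl
        · intro h; exact absurd (show (1:ℕ) = 0 from h) (by norm_num)
        · intro h; exact absurd (show (1:ℕ) = 0 from h) (by norm_num)
        · intro h; exact absurd (show (1:ℕ) = 0 from h) (by norm_num)
        · intro h; exact absurd (show (1:ℕ) = 0 from h) (by norm_num)
        · intro _; rfl
      · have q01 := qs (wst 4) 0 1 (by decide) rfl
        have q23 := qs (wst 4) 2 3 (by decide) rfl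
        rw [forall_fin4]
        exact ⟨rfl, q01, rfl, q23⟩
    · refine za_of _ 3 ![0,0,1,2] ![0,2,3] ?_ (by decide) ?_ (by rw [sumK4]; rfl)
      · refine k4cases _ ?_ ?_ ?_ ?_ ?_ ?_
        · intro _; rfl
        all_goals intro h; exact absurd (show (1:ℕ) = 0 from h) (by norm_num)
      · have q01 := qs (wst 5) 0 1 (by decide) rfl
        rw [forall_fin4]
        exact ⟨rfl, q01, rfl, rfl⟩



theorem inv_chain {D : Type} [Finite D] (rv ot : D → D) (hr : ∀ d, rv (rv d) = d) (hn : ∀ d, rv d ≠ d)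
    (ho : ∀ d, ot (ot d) = d) (d : D) (hd : ot d = d) :
    ∃ k, 1 ≤ k ∧ ot ((ot ∘ rv)^[k] d) = (ot ∘ rv)^[k] d ∧
      (∀ i, 0 < i → i < k → ot ((ot ∘ rv)^[i] d) ≠ (ot ∘ rv)^[i] d) ∧
      (∀ i j, i < j → j < k → (ot ∘ rv)^[i] d ≠ (ot ∘ rv)^[j] d) ∧
      (∀ i j, i < k → j < k → (ot ∘ rv)^[i] d ≠ rv ((ot ∘ rv)^[j] d)) ∧
      (ot ∘ rv)^[k] d = rv ((ot ∘ rv)^[k-1] d) ∧ (ot ∘ rv)^[k] d ≠ d := by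
  set φ := ot ∘ rv with hφ
  have hinj : Function.Injective φ := by
    intro a b h
    have h : ot (rv a) = ot (rv b) := h
    rw [← hr a, ← hr b, ← ho (rv a), ← ho (rv b), h]
  have hex : ∃ k, 1 ≤ k ∧ ot (φ^[k] d) = φ^[k] d := by
    have : d ∈ Function.periodicPts φ := by
      have := Function.Injective.mem_periodicPts hinj d
      exact this
    obtain ⟨k, hk, hp⟩ := this
    refine ⟨k, hk, ?_⟩
    have hp : φ^[k] d = d := hp
    rw [hp, hd]
  have hS : ∀ i, φ^[i+1] d = ot (rv (φ^[i] d)) := fun i => by rw [Function.iterate_succ_apply']; rfl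
  let k := Nat.find hex
  obtain ⟨hk1, hk2⟩ := Nat.find_spec hex
  have hmin : ∀ i, 0 < i → i < k → ot (φ^[i] d) ≠ φ^[i] d := fun i h0 h1 h => Nat.find_min hex h1 ⟨h0, h⟩
  have key : ∀ t i j, j = i + t → j < k → φ^[i] d ≠ rv (φ^[j] d) := by
    intro t
    induction t using Nat.strong_induction_on with
    | _ t ih =>
      intro i j hj hjk h
      rcases t with _ | _ | t
      · have : i = j := by omega
        subst this
        exact hn _ h.symm
      · have : j = i + 1 := by omega
        subst this
        refine hmin (i+1) (by omega) hjk ?_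
        have e1 : rv (φ^[i] d) = φ^[i+1] d := by rw [h, hr]
        conv_lhs => rw [← e1]
        rw [hS]
      · obtain ⟨j', rfl⟩ : ∃ j', j = j' + 1 := ⟨j - 1, by omega⟩
        refine ih t (by omega) (i+1) j' (by omega) (by omega) ?_
        rw [hS, h, hr, hS, ho]
  have key2 : ∀ i j, i < k → j < k → φ^[i] d ≠ rv (φ^[j] d) := by
    intro i j hi hj h
    rcases le_total i j with hij | hij
    · exact key (j - i) i j (by omega) hj h
    · refine key (i - j) j i (by omega) hi ?_
      rw [h, hr]
  have hend : φ^[k] d = rv (φ^[k-1] d) := by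
    have : k = (k - 1) + 1 := by have : 1 ≤ k := hk1; omega
    rw [← ho (rv (φ^[k-1] d)), ← hS, ← this]
    exact hk2.symm
  refine ⟨k, hk1, hk2, hmin, ?_, key2, hend, ?_⟩
  · intro i j hij hjk h
    have : j = i + (j - i) := by omega
    rw [this, Function.iterate_add_apply] at h
    have h' := (hinj.iterate i) h
    refine hmin (j - i) (by omega) (by omega) ?_
    rw [← h', hd]
  · intro h
    rw [hend] at h
    exact key2 0 (k-1) hk1 (by have : 1 ≤ k := hk1; omega) h.symm

abbrev Dart (H : Multigraph) := H.E × Bool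

def base {H : Multigraph} (d : Dart H) : H.V := if d.2 then H.tgt d.1 else H.src d.1
def rv {H : Multigraph} (d : Dart H) : Dart H := (d.1, !d.2)
def dAt {H : Multigraph} (v : H.V) : Finset (Dart H) := univ.filter fun d => base d = v

structure Ctx (H : Multigraph) (l : H.E → X) (n : ℕ) : Prop where
  conn : H.Connected
  nV : H.nV = n
  nE : H.nE = n + 2
  hn : 2 ≤ n
  flow : ∀ v : H.V, ∑ d ∈ dAt v, l d.1 = 0
  n0 : ∀ e, l e ≠ 0
  nz : ∀ e, l e ≠ z0
  used : ∀ u : X, u ≠ 0 → u ≠ z0 → ∃ e, l e = u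

theorem rv_rv {H : Multigraph} (d : Dart H) : rv (rv d) = d := by simp [rv]
theorem rv_ne {H : Multigraph} (d : Dart H) : rv d ≠ d := by
  intro h
  have := congrArg Prod.snd h
  simp [rv] at this

theorem flow_of {H : Multigraph} {L} (h : Lab H L) (v : H.V) : ∑ d ∈ dAt v, lb L d.1 = 0 := by
  rw [← lab_flow h (Pi.single v 1)]
  unfold dAt
  rw [Finset.sum_filter, Fintype.sum_prod_type]
  refine Finset.sum_congr rfl fun e _ => ?_
  rw [Fintype.sum_bool]
  change _ = ((Pi.single v (1:ZMod 2) : H.V → ZMod 2) (H.src e) + (Pi.single v (1:ZMod 2) : H.V → ZMod 2) (H.tgt e)) • _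
  simp only [base, Pi.single_apply, add_smul]
  simp [add_comm]

theorem mem_dAt {H : Multigraph} {v : H.V} {d : Dart H} : d ∈ dAt v ↔ base d = v := by simp [dAt]

namespace Ctx
variable {H : Multigraph} {l : H.E → X} {n : ℕ}

theorem cl (c : Ctx H l n) (A : H.V → Prop) (hA : ∀ d : Dart H, A (base d) → A (base (rv d)))
    (v : H.V) (hv : A v) : ∀ w, A w := by
  intro w
  have := (connOn_iff H univ).1 c.conn (fun v => if A v then 1 else 0) (by
    intro e _
    have h1 := hA (e, false)
    have h2 := hA (e, true)
    simp [base, rv] at h1 h2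
    by_cases h : A (H.src e)
    · simp [h, h1 h]
    · have : ¬ A (H.tgt e) := fun h' => h (h2 h')
      simp [h, this]) v w
  by_contra hw
  simp [hv, hw] at this

theorem ge2 (c : Ctx H l n) (v : H.V) : 2 ≤ (dAt v).card := by
  have hne : (dAt v).card ≠ 0 := by
    intro h0
    rw [Finset.card_eq_zero] at h0
    have := c.cl (fun w => w = v) (by
      intro d hd
      have : d ∈ dAt v := mem_dAt.2 hd
      rw [h0] at this; simp at this) v rfl
    have hs : Fintype.card H.V ≤ 1 := Fintype.card_le_one_iff.2 fun a b => by rw [this a, this b]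
    have := c.nV
    have := c.hn
    unfold Multigraph.nV at *
    omega
  have h1 : (dAt v).card ≠ 1 := by
    intro h
    obtain ⟨d, hd⟩ := Finset.card_eq_one.1 h
    have := c.flow v
    rw [hd, Finset.sum_singleton] at this
    exact c.n0 _ this
  omega

theorem ex_oth (d : Dart H) : ∃ d' : Dart H, ((dAt (base d)).card = 2 → d' ≠ d ∧ dAt (base d) = {d, d'}) ∧
    ((dAt (base d)).card ≠ 2 → d' = d) := by
  by_cases h : (dAt (base d)).card = 2
  · have hd : d ∈ dAt (base d) := mem_dAt.2 rfl
    obtain ⟨a, b, hab, he⟩ := Finset.card_eq_two.1 h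
    rw [he] at hd
    simp at hd
    rcases hd with rfl | rfl
    · exact ⟨b, fun _ => ⟨hab.symm, he⟩, fun h' => absurd h h'⟩
    · exact ⟨a, fun _ => ⟨hab, by rw [he, Finset.pair_comm]⟩, fun h' => absurd h h'⟩
  · exact ⟨d, fun h' => absurd h' h, fun _ => rfl⟩

end Ctx

def oth {H : Multigraph} (d : Dart H) : Dart H := (Ctx.ex_oth d).choose

namespace Ctx
variable {H : Multigraph} {l : H.E → X} {n : ℕ}

theorem oth_two {d : Dart H} (h : (dAt (base d)).card = 2) : oth d ≠ d ∧ dAt (base d) = {d, oth d} :=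
  (Ctx.ex_oth d).choose_spec.1 h
theorem oth_br {d : Dart H} (h : (dAt (base d)).card ≠ 2) : oth d = d :=
  (Ctx.ex_oth d).choose_spec.2 h
theorem oth_iff {d : Dart H} : oth d = d ↔ (dAt (base d)).card ≠ 2 :=
  ⟨fun h h2 => (oth_two h2).1 h, oth_br⟩
theorem base_oth (d : Dart H) : base (oth d) = base d := by
  by_cases h : (dAt (base d)).card = 2
  · apply mem_dAt.1
    rw [(oth_two h).2]; simp
  · rw [oth_br h]
theorem oth_oth (d : Dart H) : oth (oth d) = d := by
  by_cases h : (dAt (base d)).card = 2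
  · have h2 : (dAt (base (oth d))).card = 2 := by rw [base_oth]; exact h
    have : d ∈ dAt (base (oth d)) := by rw [base_oth]; exact mem_dAt.2 rfl
    rw [(oth_two h2).2] at this
    simp at this
    rcases this with h3 | h3
    · exact absurd h3.symm (oth_two h).1
    · exact h3.symm
  · rw [oth_br h, oth_br h]
theorem oth_l (c : Ctx H l n) (d : Dart H) : l (oth d).1 = l d.1 := by
  by_cases h : (dAt (base d)).card = 2
  · have := c.flow (base d)
    rw [(oth_two h).2, Finset.sum_pair (oth_two h).1.symm] at this
    generalize l (oth d).1 = a at *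
    generalize l d.1 = b at *
    revert a b; decide
  · rw [oth_br h]

theorem sum_deg (c : Ctx H l n) : ∑ v : H.V, (dAt v).card = 2 * n + 4 := by
  have : ∑ v : H.V, (dAt v).card = Fintype.card (Dart H) := by
    rw [← Finset.card_univ, Finset.card_eq_sum_card_fiberwise (f := base) (t := univ) (by simp)]
    rfl
  rw [this, Fintype.card_prod, Fintype.card_bool]
  have := c.nE
  unfold Multigraph.nE at this
  omega

theorem nostray (c : Ctx H l n) (S : Dart H → Prop) (h1 : ∀ d, S d → S (rv d)) (h2 : ∀ d, S d → S (oth d))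
    (h3 : ∀ d, S d → oth d ≠ d) : ∀ d, ¬ S d := by
  intro d hd
  have key : ∀ d d', S d → base d' = base d → S d' := by
    intro d d' hd hb
    have h := h3 d hd
    rw [Ne, oth_iff, not_not] at h
    have : d' ∈ dAt (base d) := mem_dAt.2 hb
    rw [(oth_two h).2] at this
    simp at this
    rcases this with rfl | rfl
    · exact hd
    · exact h2 _ hd
  have := c.cl (fun v => ∃ d, S d ∧ base d = v) (by
    rintro d ⟨d', h, hb⟩
    exact ⟨rv d, h1 _ (key _ _ h hb.symm), rfl⟩) (base d) ⟨d, hd, rfl⟩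
  have h4 : ∀ v : H.V, (dAt v).card = 2 := by
    intro v
    obtain ⟨d, hd, rfl⟩ := this v
    by_contra h
    exact h3 d hd (oth_br h)
  have h5 := c.sum_deg
  rw [Finset.sum_congr rfl fun v _ => h4 v] at h5
  have := c.nV
  unfold Multigraph.nV at this
  simp at h5
  omega

end Ctx



def ph {H : Multigraph} : Dart H → Dart H := oth ∘ rv

theorem ph_chain {H : Multigraph} (d : Dart H) (hd : oth d = d) : ∃ k, 1 ≤ k ∧ oth (ph^[k] d) = ph^[k] d ∧
      (∀ i, 0 < i → i < k → oth (ph^[i] d) ≠ ph^[i] d) ∧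
      (∀ i j, i < j → j < k → ph^[i] d ≠ ph^[j] d) ∧
      (∀ i j, i < k → j < k → ph^[i] d ≠ rv (ph^[j] d)) ∧
      ph^[k] d = rv (ph^[k-1] d) ∧ ph^[k] d ≠ d :=
  inv_chain rv oth rv_rv rv_ne Ctx.oth_oth d hd

theorem ph_succ {H : Multigraph} (d : Dart H) (i : ℕ) : ph^[i+1] d = oth (rv (ph^[i] d)) := by
  rw [Function.iterate_succ_apply']; rfl

def six : Finset X := univ.filter fun u => u ≠ 0 ∧ u ≠ z0
theorem six_card : six.card = 6 := by decide

namespace Ctx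
variable {H : Multigraph} {l : H.E → X} {n : ℕ}

theorem ph_l (c : Ctx H l n) (d : Dart H) (i : ℕ) : l (ph^[i] d).1 = l d.1 := by
  induction i with
  | zero => rfl
  | succ i ih => rw [ph_succ, c.oth_l]; exact ih

theorem mem_six (c : Ctx H l n) (e : H.E) : l e ∈ six := by
  simp [six, c.n0, c.nz]

theorem lab2 (c : Ctx H l n) (u : X) (hu : u ∈ six) :
    2 ≤ ((univ.filter fun d : Dart H => oth d = d).filter fun d => l d.1 = u).card := by
  simp [six] at hu
  obtain ⟨e, he⟩ := c.used u hu.1 hu.2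
  have : ∃ d : Dart H, oth d = d ∧ l d.1 = u := by
    by_contra hcon
    push Not at hcon
    refine c.nostray (fun d => l d.1 = u) (fun d h => h) (fun d h => by rw [c.oth_l]; exact h) (fun d h h' => hcon d h' h) (e, false) he
  obtain ⟨d, hd, hl⟩ := this
  obtain ⟨k, -, h2, -, -, -, -, hne⟩ := ph_chain d hd
  refine (Finset.card_pair hne).symm.trans_le (Finset.card_le_card ?_)
  intro x hx
  simp at hx
  rcases hx with rfl | rfl
  · simp [h2, c.ph_l, hl]
  · simp [hd, hl]

def bV (H : Multigraph) : Finset H.V := univ.filter fun v => (dAt v).card ≠ 2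

theorem counts (c : Ctx H l n) : (bV H).card = 4 ∧ (∀ v ∈ bV H, (dAt v).card = 3) ∧
    ∀ u ∈ six, ((univ.filter fun d : Dart H => oth d = d).filter fun d => l d.1 = u).card = 2 := by
  have h1 : (univ.filter fun d : Dart H => oth d = d).card = ∑ v ∈ bV H, (dAt v).card := by
    rw [Finset.card_eq_sum_card_fiberwise (f := base) (t := bV H)]
    · refine Finset.sum_congr rfl fun v hv => ?_
      congr 1
      ext d
      simp [bV] at hv
      simp only [mem_filter, mem_univ, true_and, mem_dAt, oth_iff]
      constructor
      · exact fun h => h.2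
      · rintro rfl; exact ⟨hv, rfl⟩
    · intro d hd
      simp only [coe_filter, mem_univ, true_and, Set.mem_ofPred_eq, oth_iff] at hd
      simp [bV, hd]
  have h2 : (univ.filter fun d : Dart H => oth d = d).card = ∑ u ∈ six, ((univ.filter fun d : Dart H => oth d = d).filter fun d => l d.1 = u).card :=
    Finset.card_eq_sum_card_fiberwise (fun d _ => c.mem_six d.1)
  have h3 := c.sum_deg
  rw [← Finset.sum_filter_add_sum_filter_not univ (fun v : H.V => (dAt v).card ≠ 2)] at h3
  rw [Finset.sum_congr rfl (g := fun _ => 2) (s₁ := univ.filter fun v : H.V => ¬ (dAt v).card ≠ 2) (by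
    intro v hv; simpa using hv)] at h3
  have h4 : (bV H).card + (univ.filter fun v : H.V => ¬ (dAt v).card ≠ 2).card = n := by
    rw [← c.nV]
    exact Finset.card_filter_add_card_filter_not (s := univ) (fun v : H.V => (dAt v).card ≠ 2)
  rw [Finset.sum_const, smul_eq_mul] at h3
  change ∑ v ∈ bV H, (dAt v).card + _ = _ at h3
  have h5 : ∀ v ∈ bV H, 3 ≤ (dAt v).card := by
    intro v hv
    simp [bV] at hv
    have := c.ge2 v
    omega
  have h6 : (bV H).card * 3 ≤ ∑ v ∈ bV H, (dAt v).card := by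
    rw [← smul_eq_mul]; exact Finset.card_nsmul_le_sum _ _ _ h5
  have h7 : six.card * 2 ≤ ∑ u ∈ six, ((univ.filter fun d : Dart H => oth d = d).filter fun d => l d.1 = u).card := by
    rw [← smul_eq_mul]; exact Finset.card_nsmul_le_sum _ _ _ c.lab2
  rw [six_card] at h7
  have hb : (bV H).card = 4 := by omega
  have e1 : ∑ v ∈ bV H, 3 = ∑ v ∈ bV H, (dAt v).card := by
    rw [Finset.sum_const, smul_eq_mul]; omega
  have e2 : ∑ u ∈ six, 2 = ∑ u ∈ six, ((univ.filter fun d : Dart H => oth d = d).filter fun d => l d.1 = u).card := by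
    rw [Finset.sum_const, smul_eq_mul, six_card]; omega
  refine ⟨hb, fun v hv => ?_, fun u hu => ?_⟩
  · exact ((Finset.sum_eq_sum_iff_of_le h5).1 e1 v hv).symm
  · exact ((Finset.sum_eq_sum_iff_of_le c.lab2).1 e2 u hu).symm

end Ctx

set_option synthInstance.maxSize 4000 in
theorem three_dec : ∀ a b c : X, a ≠ 0 → b ≠ 0 → c ≠ 0 → a + b + c = 0 → a ≠ b ∧ a ≠ c ∧ b ≠ c := by decide +kernel

set_option synthInstance.maxSize 4000 in
theorem star_dec : ∀ x ∈ six, ∀ y ∈ six, ∀ z ∈ six, x + y + z = 0 → ∃ s : Fin 4,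
    (∀ u ∈ six, (u = x ∨ u = y ∨ u = z) ↔ ∃ j, j ≠ s ∧ u = pp s j) := by decide +kernel

theorem pp_six : ∀ i j : Fin 4, i ≠ j → pp i j ∈ six := by decide
theorem pp_ex : ∀ u ∈ six, ∃ i j : Fin 4, i < j ∧ u = pp i j := by decide
theorem pp_symm : ∀ i j, pp i j = pp j i := by decide
theorem pp_star : ∀ i j s : Fin 4, i ≠ j → ((∃ k, k ≠ s ∧ pp i j = pp s k) ↔ (s = i ∨ s = j)) := by decide +kernel
theorem pp_inj : ∀ i j k t : Fin 4, i ≠ j → k ≠ t → pp i j = pp k t → (i = k ∧ j = t) ∨ (i = t ∧ j = k) := by decide +kernel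

namespace Ctx
variable {H : Multigraph} {l : H.E → X} {n : ℕ}

theorem star (c : Ctx H l n) (v : H.V) (hv : v ∈ bV H) : ∃ s : Fin 4, Set.InjOn (fun d : Dart H => l d.1) (dAt v) ∧
    ∀ i j, i ≠ j → ((∃ d ∈ dAt v, l d.1 = pp i j) ↔ (s = i ∨ s = j)) := by
  have h3 := c.counts.2.1 v hv
  obtain ⟨x, y, z, hxy, hxz, hyz, he⟩ := Finset.card_eq_three.1 h3
  have hf := c.flow v
  rw [he, Finset.sum_insert (by simp [hxy, hxz]), Finset.sum_pair hyz, ← add_assoc] at hf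
  obtain ⟨s, hs⟩ := star_dec _ (c.mem_six x.1) _ (c.mem_six y.1) _ (c.mem_six z.1) hf
  have n1 := c.n0 x.1
  have n2 := c.n0 y.1
  have n3 := c.n0 z.1
  refine ⟨s, ?_, ?_⟩
  · obtain ⟨k1, k2, k3⟩ := three_dec _ _ _ n1 n2 n3 hf
    rw [he]
    intro a ha b hb hab
    simp at ha hb
    simp only at hab
    rcases ha with rfl | rfl | rfl <;> rcases hb with rfl | rfl | rfl <;> first | rfl | (exact absurd hab k1) | (exact absurd hab k2) | (exact absurd hab k3) | (exact absurd hab.symm k1) | (exact absurd hab.symm k2) | (exact absurd hab.symm k3)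
  · intro i j hij
    rw [← pp_star i j s hij, ← hs _ (pp_six i j hij), he]
    simp [eq_comm]

theorem stars (c : Ctx H l n) : ∃ b : Fin 4 → H.V, ∃ δ : Fin 4 → Fin 4 → Dart H,
    ∀ i j, i ≠ j → base (δ i j) = b i ∧ l (δ i j).1 = pp i j ∧ oth (δ i j) = δ i j ∧
      ∀ d : Dart H, oth d = d → l d.1 = pp i j → d = δ i j ∨ d = δ j i := by
  have hst : ∀ v : H.V, ∃ s : Fin 4, v ∈ bV H → Set.InjOn (fun d : Dart H => l d.1) (dAt v) ∧
    ∀ i j, i ≠ j → ((∃ d ∈ dAt v, l d.1 = pp i j) ↔ (s = i ∨ s = j)) := by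
    intro v
    by_cases hv : v ∈ bV H
    · obtain ⟨s, hs⟩ := c.star v hv
      exact ⟨s, fun _ => hs⟩
    · exact ⟨0, fun h => absurd h hv⟩
  choose t ht using hst
  have hbr : ∀ d : Dart H, oth d = d ↔ base d ∈ bV H := by
    intro d; simp [oth_iff, bV]
  have hc2 : ∀ i j, i ≠ j → ((bV H).filter fun v => t v = i ∨ t v = j).card = 2 := by
    intro i j hij
    rw [← c.counts.2.2 _ (pp_six i j hij)]
    symm
    refine Finset.card_bij (fun d _ => base d) ?_ ?_ ?_
    · intro d hd
      simp only [mem_filter, mem_univ, true_and, hbr] at hd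
      simp only [mem_filter]
      exact ⟨hd.1, ((ht _ hd.1).2 i j hij).1 ⟨d, mem_dAt.2 rfl, hd.2⟩⟩
    · intro d hd d' hd' h
      simp only [mem_filter, mem_univ, true_and, hbr] at hd hd'
      exact (ht _ hd.1).1 (mem_coe.2 (mem_dAt.2 rfl)) (mem_coe.2 (mem_dAt.2 h.symm)) (hd.2.trans hd'.2.symm)
    · intro v hv
      simp only [mem_filter] at hv
      obtain ⟨d, hd, hl⟩ := ((ht _ hv.1).2 i j hij).2 hv.2
      rw [mem_dAt] at hd
      refine ⟨d, ?_, hd⟩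
      simp only [mem_filter, mem_univ, true_and, hbr, hd]
      exact ⟨hv.1, hl⟩
  have hc3 : ∀ i j, i ≠ j → ((bV H).filter fun v => t v = i).card + ((bV H).filter fun v => t v = j).card = 2 := by
    intro i j hij
    rw [← hc2 i j hij, Finset.filter_or, Finset.card_union_of_disjoint]
    rw [Finset.disjoint_filter]
    rintro v _ rfl h
    exact hij h
  have hc1 : ∀ i, ((bV H).filter fun v => t v = i).card = 1 := by
    have a1 := hc3 0 1 (by decide)
    have a2 := hc3 0 2 (by decide)
    have a3 := hc3 1 2 (by decide)
    have a4 := hc3 0 3 (by decide)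
    rw [forall_fin4]
    omega
  have hb : ∀ i, ∃ b : H.V, ((bV H).filter fun v => t v = i) = {b} := fun i => Finset.card_eq_one.1 (hc1 i)
  choose b hb using hb
  have hbm : ∀ i, b i ∈ bV H ∧ t (b i) = i := by
    intro i
    have : b i ∈ ((bV H).filter fun v => t v = i) := by rw [hb]; simp
    simpa using this
  have hbu : ∀ v ∈ bV H, v = b (t v) := by
    intro v hv
    have : v ∈ ((bV H).filter fun w => t w = t v) := by simp [hv]
    rw [hb] at this; simpa using this
  have hδ : ∀ i j, ∃ d : Dart H, i ≠ j → d ∈ dAt (b i) ∧ l d.1 = pp i j := by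
    intro i j
    by_cases hij : i = j
    · obtain ⟨e, -⟩ := c.used p01 (by decide) (by decide)
      exact ⟨(e, false), fun h => absurd hij h⟩
    · obtain ⟨d, hd⟩ := ((ht _ (hbm i).1).2 i j hij).2 (Or.inl (hbm i).2)
      exact ⟨d, fun _ => hd⟩
  choose δ hδ using hδ
  refine ⟨b, δ, fun i j hij => ?_⟩
  obtain ⟨h1, h2⟩ := hδ i j hij
  obtain ⟨h3, h4⟩ := hδ j i hij.symm
  rw [mem_dAt] at h1 h3
  refine ⟨h1, h2, ?_, ?_⟩
  · rw [hbr, h1]; exact (hbm i).1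
  · intro d hd hl
    rw [hbr] at hd
    have hbd := hbu _ hd
    have := ((ht _ hd).2 i j hij).1 ⟨d, mem_dAt.2 rfl, hl⟩
    rcases this with h | h
    · left
      rw [h] at hbd
      exact (ht _ hd).1 (mem_coe.2 (mem_dAt.2 rfl)) (mem_coe.2 (mem_dAt.2 (by rw [h1, hbd]))) (hl.trans h2.symm)
    · right
      rw [h] at hbd
      exact (ht _ hd).1 (mem_coe.2 (mem_dAt.2 rfl)) (mem_coe.2 (mem_dAt.2 (by rw [h3, hbd]))) (hl.trans ((pp_symm i j).trans h4.symm))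

end Ctx



theorem dart_eq {H : Multigraph} (d d' : Dart H) (h : d.1 = d'.1) : d = d' ∨ d = rv d' := by
  obtain ⟨e, x⟩ := d
  obtain ⟨e', y⟩ := d'
  simp only at h
  subst h
  cases x <;> cases y <;> simp [rv]

theorem Ctx.iso {H : Multigraph} {l : H.E → X} {n : ℕ} (c : Ctx H l n) (s : Fin 4 → Fin 4)
    (hs : Function.Injective s) (w : K4.E → ℕ) (hw : ∀ f, 1 ≤ w f)
    (hN : ∀ f : K4.E, (univ.filter fun e => l e = pp (s f.1.1) (s f.1.2)).card = w f)
    (hV : (subdivide K4 w).nV = n) : IsIso (subdivide K4 w) H := by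
  have hsur : Function.Surjective s := Finite.surjective_of_injective hs
  obtain ⟨b, δ, hδ⟩ := c.stars
  have hne : ∀ f : K4.E, s f.1.1 ≠ s f.1.2 := fun f h => absurd (hs h) (ne_of_lt f.2)
  let D : K4.E → Dart H := fun f => δ (s f.1.1) (s f.1.2)
  have hDl : ∀ f, l (D f).1 = pp (s f.1.1) (s f.1.2) := fun f => (hδ _ _ (hne f)).2.1
  have hDo : ∀ f, oth (D f) = D f := fun f => (hδ _ _ (hne f)).2.2.1
  choose k hk1 hkb hkm hkd hkr hke hkn using fun f => ph_chain (D f) (hDo f)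
  have hend : ∀ f, ph^[k f] (D f) = δ (s f.1.2) (s f.1.1) := by
    intro f
    rcases (hδ _ _ (hne f)).2.2.2 (ph^[k f] (D f)) (hkb f) (by rw [c.ph_l, hDl]) with h | h
    · exact absurd h (hkn f)
    · exact h
  have cover : ∀ d : Dart H, ∃ f, ∃ i, i < k f ∧ (d = ph^[i] (D f) ∨ d = rv (ph^[i] (D f))) := by
    intro d
    by_contra hd
    refine c.nostray (fun d => ¬ ∃ f, ∃ i, i < k f ∧ (d = ph^[i] (D f) ∨ d = rv (ph^[i] (D f)))) ?_ ?_ ?_ d hd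
    · rintro d hd ⟨f, i, hi, h | h⟩
      · exact hd ⟨f, i, hi, Or.inr (by rw [← h, rv_rv])⟩
      · exact hd ⟨f, i, hi, Or.inl (by rw [← rv_rv d, h, rv_rv])⟩
    · rintro d hd ⟨f, i, hi, h | h⟩
      · rcases i with _ | i
        · refine hd ⟨f, 0, hi, Or.inl ?_⟩
          change oth d = D f at h
          change d = D f
          rw [← hDo f, ← h, Ctx.oth_oth]
        · refine hd ⟨f, i, by omega, Or.inr ?_⟩
          rw [ph_succ] at h
          rw [← Ctx.oth_oth d, h, Ctx.oth_oth]
      · have h2 : d = ph^[i+1] (D f) := by rw [ph_succ, ← h, Ctx.oth_oth]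
        by_cases hi1 : i + 1 < k f
        · exact hd ⟨f, i+1, hi1, Or.inl h2⟩
        · have : i + 1 = k f := by omega
          refine hd ⟨f, i, hi, Or.inr ?_⟩
          rw [h2, this, hke f]
          congr 2; omega
    · intro d hd hbr
      apply hd
      obtain ⟨i, j, hij, hl⟩ := pp_ex _ (c.mem_six d.1)
      obtain ⟨i, rfl⟩ := hsur i
      obtain ⟨j, rfl⟩ := hsur j
      have hex : ∃ f : K4.E, l d.1 = pp (s f.1.1) (s f.1.2) := by
        rcases lt_trichotomy i j with h | h | h
        · exact ⟨⟨(i, j), h⟩, hl⟩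
        · subst h; exact absurd hij (lt_irrefl _)
        · exact ⟨⟨(j, i), h⟩, by rw [hl, pp_symm]⟩
      obtain ⟨f, hf⟩ := hex
      refine ⟨f, ?_⟩
      rcases (hδ _ _ (hne f)).2.2.2 d hbr hf with h | h
      · exact ⟨0, hk1 f, Or.inl h⟩
      · refine ⟨k f - 1, by have := hk1 f; omega, Or.inr ?_⟩
        rw [← hke f, hend f, h]
  have finj : ∀ f f' : K4.E, pp (s f.1.1) (s f.1.2) = pp (s f'.1.1) (s f'.1.2) → f = f' := by
    intro f f' h
    apply Subtype.ext
    rcases pp_inj _ _ _ _ (hne f) (hne f') h with ⟨h1, h2⟩ | ⟨h1, h2⟩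
    · exact Prod.ext (hs h1) (hs h2)
    · have a := f.2
      have b := f'.2
      rw [hs h1, hs h2] at a
      exact absurd a (lt_asymm b)
  have iinj : ∀ f i j, i < k f → j < k f → (ph^[i] (D f)).1 = (ph^[j] (D f)).1 → i = j := by
    intro f i j hi hj h
    rcases dart_eq _ _ h with h | h
    · rcases lt_trichotomy i j with h' | h' | h'
      · exact absurd h (hkd f i j h' hj)
      · exact h'
      · exact absurd h.symm (hkd f j i h' hi)
    · exact absurd h (hkr f i j hi hj)
  have hkw : k = w := by
    funext f
    rw [← hN f]
    have : (univ.filter fun e => l e = pp (s f.1.1) (s f.1.2)) = (Finset.range (k f)).image fun i => (ph^[i] (D f)).1 := by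
      ext e
      simp only [mem_filter, mem_univ, true_and, mem_image, mem_range]
      constructor
      · intro he
        obtain ⟨f', i, hi, h⟩ := cover (e, false)
        have h1 : e = (ph^[i] (D f')).1 := by
          rcases h with h | h
          · rw [← h]
          · have := congrArg Prod.fst h
            exact this
        have : f = f' := by
          apply finj
          rw [← he, h1, c.ph_l, hDl]
        subst this
        exact ⟨i, hi, h1.symm⟩
      · rintro ⟨i, hi, rfl⟩
        rw [c.ph_l, hDl]
    rw [this, Finset.card_image_of_injOn, Finset.card_range]
    intro i hi j hj h
    exact iinj f i j (by simpa using hi) (by simpa using hj) h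
  subst hkw
  let g : (subdivide K4 k).E → H.E := fun x => (ph^[x.2.val] (D x.1)).1
  have hg : Function.Bijective g := by
    constructor
    · rintro ⟨f, i⟩ ⟨f', i'⟩ h
      change (ph^[i.val] (D f)).1 = (ph^[i'.val] (D f')).1 at h
      have : f = f' := by
        apply finj
        rw [← hDl f, ← hDl f', ← c.ph_l (D f) i, ← c.ph_l (D f') i', h]
      subst this
      have := iinj f i i' i.2 i'.2 h
      rw [Fin.ext this]
    · intro e
      obtain ⟨f, i, hi, h⟩ := cover (e, false)
      refine ⟨⟨f, ⟨i, hi⟩⟩, ?_⟩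
      rcases h with h | h
      · change (ph^[i] (D f)).1 = e
        rw [← h]
      · exact (congrArg Prod.fst h).symm
  let F : (subdivide K4 k).V → H.V := Sum.elim (Quot.lift (fun v => b (s v)) (by
    rintro u v ⟨e, he, -⟩
    have := hw e
    omega)) (fun x => base (ph^[x.2.val+1] (D x.1)))
  have hF : ∀ f j, j ≤ k f → F (chainNode K4 k f j) = base (ph^[j] (D f)) := by
    intro f j hj
    unfold chainNode
    split_ifs with h1 h2
    · change base (ph^[j - 1 + 1] (D f)) = _
      congr 2
      have : j - 1 + 1 = j := by omega
      rw [this]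
    · subst h2
      exact (hδ _ _ (hne f)).1.symm
    · have : j = k f := by omega
      subst this
      rw [hend]
      exact (hδ _ _ (hne f).symm).1.symm
  have hrv : ∀ f i, base (rv (ph^[i] (D f))) = base (ph^[i+1] (D f)) := by
    intro f i
    rw [ph_succ, Ctx.base_oth]
  have hFb : Function.Bijective F := by
    rw [Fintype.bijective_iff_surjective_and_card]
    refine ⟨?_, ?_⟩
    · intro v
      have := c.ge2 v
      obtain ⟨d, hd⟩ := Finset.card_pos.1 (show 0 < (dAt v).card by omega)
      rw [mem_dAt] at hd
      obtain ⟨f, i, hi, h | h⟩ := cover d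
      · exact ⟨chainNode K4 k f i, by rw [hF f i hi.le, ← h, hd]⟩
      · exact ⟨chainNode K4 k f (i+1), by rw [hF f (i+1) hi, ← hrv, ← h, hd]⟩
    · exact hV.trans c.nV.symm
  refine ⟨⟨Equiv.ofBijective F hFb, Equiv.ofBijective g hg, ?_⟩⟩
  rintro ⟨f, i⟩
  have h1 : F ((subdivide K4 k).src ⟨f, i⟩) = base (ph^[i.val] (D f)) := hF f i i.2.le
  have h2 : F ((subdivide K4 k).tgt ⟨f, i⟩) = base (rv (ph^[i.val] (D f))) := by
    rw [hrv]; exact hF f (i+1) i.2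
  rw [Equiv.ofBijective_apply, Equiv.ofBijective_apply, h1, h2]
  change (H.src (ph^[i.val] (D f)).1 = _ ∧ H.tgt (ph^[i.val] (D f)).1 = _) ∨ (H.src (ph^[i.val] (D f)).1 = _ ∧ H.tgt (ph^[i.val] (D f)).1 = _)
  generalize ph^[i.val] (D f) = d
  obtain ⟨e, x⟩ := d
  cases x <;> simp [base, rv]

theorem opt_iso {H : Multigraph} {n : ℕ} (hn : 4 ≤ n) (hH : memG H n (n+2)) (ho : Opt H (n+2)) :
    IsIso (subdivide K4 (wst (n+2))) H := by
  obtain ⟨L, hL, hz⟩ := exists_lab' H n (by omega) hH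
  have good : Good H (n+2) L := ⟨hH.2.2, hH.2.1, hL, hz⟩
  have h0 := good.N0 ho
  obtain ⟨s, hs, horb⟩ := good.orbit ho (by omega)
  have hsur : Function.Surjective s := Finite.surjective_of_injective hs
  have hq : 1 ≤ (n + 2) / 6 := by omega
  have c : Ctx H (lb L) n := by
    refine ⟨hH.2.2, hH.1, hH.2.1, by omega, flow_of hL, ?_, ?_, ?_⟩
    · intro e he
      unfold NN at h0
      rw [Finset.card_eq_zero, Finset.filter_eq_empty_iff] at h0
      exact h0 (mem_univ e) he
    · intro e he
      unfold NN at hz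
      rw [Finset.card_eq_zero, Finset.filter_eq_empty_iff] at hz
      exact hz (mem_univ e) he
    · intro u hu hu'
      obtain ⟨i, j, hij, rfl⟩ := pp_ex u (by simp [six, hu, hu'])
      obtain ⟨i, rfl⟩ := hsur i
      obtain ⟨j, rfl⟩ := hsur j
      have : 0 < NN L (pp (s i) (s j)) := by
        rcases lt_trichotomy i j with h | h | h
        · rw [horb i j h]; omega
        · subst h; exact absurd hij (lt_irrefl _)
        · rw [pp_symm, horb j i h]; omega
      obtain ⟨e, he⟩ := Finset.card_pos.1 this
      exact ⟨e, by simpa using he⟩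
  have hm := sub_memG (wst (n+2)) n (wst_za (n+2) (by omega)) (wst_sum (n+2))
  refine c.iso s hs _ (fun f => ?_) (fun f => ?_) hm.1
  · unfold wst; omega
  · exact horb _ _ f.2



theorem all_conn (H : Multigraph) (m i : ℕ) (h : H.nE = m) (hc : cc H i = m.choose i) (F : Finset H.E)
    (hF : F.card = i) : H.ConnOn (univ \ F) := by
  have h1 : ((Finset.univ : Finset (Finset H.E)).filter fun F => F.card = i ∧ H.ConnOn (univ \ F)) = powersetCard i univ := by
    apply Finset.eq_of_subset_of_card_le
    · intro F hF
      simp at hF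
      simp [mem_powersetCard, hF.1]
    · rw [Finset.card_powersetCard, Finset.card_univ]
      unfold Multigraph.nE at h
      unfold cc at hc
      rw [h, hc]
  have : F ∈ powersetCard i (univ : Finset H.E) := by simp [mem_powersetCard, hF]
  rw [← h1] at this
  simp at this
  exact this.2

def en {H : Multigraph} {n : ℕ} (σ : H.V ≃ Fin n) (e : H.E) : Sym2 (Fin n) := s(σ (H.src e), σ (H.tgt e))

def Model (H : Multigraph) (n : ℕ) (M : Sym2 (Fin n) → ℕ) : Prop :=
  ∃ σ : H.V ≃ Fin n, ∀ s, (univ.filter fun e => en σ e = s).card = M s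

theorem model_iso {G H : Multigraph} {n : ℕ} {M : Sym2 (Fin n) → ℕ} (hG : Model G n M) (hH : Model H n M) : IsIso G H := by
  obtain ⟨σ, hσ⟩ := hG
  obtain ⟨τ, hτ⟩ := hH
  have hc : ∀ s, Fintype.card {e // en σ e = s} = Fintype.card {e // en τ e = s} := by
    intro s
    rw [Fintype.card_subtype, Fintype.card_subtype, hσ, hτ]
  let E : G.E ≃ H.E := ((Equiv.sigmaFiberEquiv (en σ)).symm.trans
    (Equiv.sigmaCongrRight fun s => Fintype.equivOfCardEq (hc s))).trans (Equiv.sigmaFiberEquiv (en τ))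
  have hE : ∀ e, en τ (E e) = en σ e := fun e => (Fintype.equivOfCardEq (hc (en σ e)) ⟨e, rfl⟩).2
  refine ⟨⟨σ.trans τ.symm, E, ?_⟩⟩
  intro e
  have := hE e
  unfold en at this
  rw [Sym2.eq_iff] at this
  simp only [Equiv.trans_apply]
  rcases this with ⟨h1, h2⟩ | ⟨h1, h2⟩
  · left; rw [← h1, ← h2]; simp
  · right; rw [← h1, ← h2]; simp

theorem model1 {H : Multigraph} (hH : memG H 1 3) : Model H 1 (fun _ => 3) := by
  obtain ⟨h1, h2, -⟩ := hH
  refine ⟨Fintype.equivFinOfCardEq h1, fun s => ?_⟩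
  rw [← h2]
  unfold Multigraph.nE
  rw [← Finset.card_univ]
  congr 1
  ext e
  simp only [mem_filter, mem_univ, true_and, iff_true]
  generalize en _ e = t
  revert s t
  decide

theorem S2_5 : S2 5 = 20 := by simp [S2]

theorem sym2_2 : ∀ a b : Fin 2, a ≠ b → s(a, b) = s(0, 1) := by decide

theorem model2 {H : Multigraph} (hH : memG H 2 4) (ho : Opt H 4) :
    Model H 2 (fun s => if s = s(0,1) then 4 else 0) := by
  obtain ⟨h1, h2, -⟩ := hH
  have hc : cc H 3 = Nat.choose 4 3 := ho.2.2
  have hl : ∀ e, H.src e ≠ H.tgt e := by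
    intro e he
    have h := all_conn H 4 3 h2 hc (univ \ {e}) (by
      rw [Finset.card_sdiff, Finset.card_univ]
      unfold Multigraph.nE at h2
      simp [h2])
    rw [connOn_iff] at h
    obtain ⟨a, b, hab⟩ : ∃ a b : H.V, a ≠ b := by
      apply Fintype.exists_pair_of_one_lt_card
      unfold Multigraph.nV at h1
      omega
    have := h (fun v => if v = a then 1 else 0) (by
      intro f hf
      simp at hf
      subst hf
      rw [he]) a b
    simp [hab.symm] at this
  let σ : H.V ≃ Fin 2 := Fintype.equivFinOfCardEq h1
  have hs : ∀ e, en σ e = s(0,1) := fun e => sym2_2 _ _ (fun h => hl e (σ.injective h))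
  refine ⟨σ, fun s => ?_⟩
  simp only [hs]
  by_cases h : s = s(0,1)
  · subst h
    simp
    exact h2
  · have : ¬ s(0,1) = s := fun k => h k.symm
    simp [h, this]

theorem univ3 : (univ : Finset (Sym2 (Fin 3))) = {s(0,0), s(1,1), s(2,2), s(0,1), s(0,2), s(1,2)} := by decide

theorem all3 : ∀ s : Sym2 (Fin 3), s = s(0,0) ∨ s = s(1,1) ∨ s = s(2,2) ∨ s = s(0,1) ∨ s = s(0,2) ∨ s = s(1,2) := by decide

def M3 (s : Sym2 (Fin 3)) : ℕ := if s = s(0,1) then 1 else if s = s(0,2) ∨ s = s(1,2) then 2 else 0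

theorem cut3 {H : Multigraph} (σ : H.V ≃ Fin 3) (h : ∀ F : Finset H.E, F.card = 2 → H.ConnOn (univ \ F))
    (hE : H.nE = 5) (a b c : Fin 3) (hd : a ≠ b ∧ a ≠ c ∧ ∀ t, t = a ∨ t = b ∨ t = c) :
    3 ≤ (univ.filter fun e => en σ e = s(a,b)).card + (univ.filter fun e => en σ e = s(a,c)).card := by
  by_contra hlt
  have h1 : ((univ.filter fun e => en σ e = s(a,b)) ∪ (univ.filter fun e => en σ e = s(a,c))).card ≤ 2 := by
    have := Finset.card_union_le (univ.filter fun e => en σ e = s(a,b)) (univ.filter fun e => en σ e = s(a,c))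
    omega
  obtain ⟨F, hF, hc⟩ := Finset.exists_superset_card_eq h1 (by unfold Multigraph.nE at hE; omega)
  have := h F hc
  rw [connOn_iff] at this
  have := this (fun v => if σ v = a then 1 else 0) (by
    intro e he
    have h1 : ¬ (en σ e = s(a,b)) := fun k => (mem_sdiff.1 he).2 (hF (by simp [k]))
    have h2 : ¬ (en σ e = s(a,c)) := fun k => (mem_sdiff.1 he).2 (hF (by simp [k]))
    unfold en at h1 h2
    by_cases ka : σ (H.src e) = a
    · by_cases kb : σ (H.tgt e) = a
      · rw [ka, kb]
      · exfalso
        rcases hd.2.2 (σ (H.tgt e)) with k | k | k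
        · exact kb k
        · rw [ka, k] at h1; exact h1 rfl
        · rw [ka, k] at h2; exact h2 rfl
    · by_cases kb : σ (H.tgt e) = a
      · exfalso
        rcases hd.2.2 (σ (H.src e)) with k | k | k
        · exact ka k
        · rw [kb, k] at h1; exact h1 Sym2.eq_swap
        · rw [kb, k] at h2; exact h2 Sym2.eq_swap
      · simp [ka, kb]) (σ.symm a) (σ.symm b)
  simp [hd.1.symm] at this


theorem model3 {H : Multigraph} (hH : memG H 3 5) (ho : Opt H 5) : Model H 3 M3 := by
  obtain ⟨h1, h2, -⟩ := hH
  have hc : cc H 2 = Nat.choose 5 2 := by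
    have := ho.2.1
    rw [S2_5] at this
    change _ = 10
    omega
  have hcon := all_conn H 5 2 h2 hc
  let σ : H.V ≃ Fin 3 := Fintype.equivFinOfCardEq h1
  have a1 := cut3 σ hcon h2 0 1 2 (by decide)
  have a2 := cut3 σ hcon h2 1 0 2 (by decide)
  have a3 := cut3 σ hcon h2 2 0 1 (by decide)
  rw [Sym2.eq_swap (a := 1) (b := 0)] at a2
  rw [Sym2.eq_swap (a := 2) (b := 0), Sym2.eq_swap (a := 2) (b := 1)] at a3
  have hsum : ∑ s : Sym2 (Fin 3), (univ.filter fun e => en σ e = s).card = 5 := by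
    rw [← h2]
    unfold Multigraph.nE
    rw [← Finset.card_univ]
    exact (Finset.card_eq_sum_card_fiberwise (fun e _ => by simp)).symm
  have hτ : ∃ τ : Equiv.Perm (Fin 3), ∀ s, (univ.filter fun e => en σ e = Sym2.map τ s).card = M3 s := by
    generalize hcc : (fun s => (univ.filter fun e => en σ e = s).card) = cn at *
    have hcc' : ∀ s, (univ.filter fun e => en σ e = s).card = cn s := fun s => congrFun hcc s
    simp only [hcc'] at *
    rw [univ3] at hsum
    rw [Finset.sum_insert (by decide), Finset.sum_insert (by decide), Finset.sum_insert (by decide), Finset.sum_insert (by decide),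
      Finset.sum_insert (by decide), Finset.sum_singleton] at hsum
    have m0 : M3 s(0,0) = 0 := by decide
    have m1 : M3 s(1,1) = 0 := by decide
    have m2 : M3 s(2,2) = 0 := by decide
    have m3 : M3 s(0,1) = 1 := by decide
    have m4 : M3 s(0,2) = 2 := by decide
    have m5 : M3 s(1,2) = 2 := by decide
    have hcase : cn s(0,1) = 1 ∨ cn s(0,2) = 1 ∨ cn s(1,2) = 1 := by omega
    rcases hcase with h | h | h
    · refine ⟨1, fun s => ?_⟩
      rcases all3 s with rfl | rfl | rfl | rfl | rfl | rfl <;> simp only [m0, m1, m2, m3, m4, m5, Sym2.map_mk] <;>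
        simp only [Equiv.Perm.coe_one, id] <;> omega
    · refine ⟨Equiv.swap 1 2, fun s => ?_⟩
      have t0 : (Equiv.swap 1 2 : Equiv.Perm (Fin 3)) 0 = 0 := by decide
      have t1 : (Equiv.swap 1 2 : Equiv.Perm (Fin 3)) 1 = 2 := by decide
      have t2 : (Equiv.swap 1 2 : Equiv.Perm (Fin 3)) 2 = 1 := by decide
      have r1 : s((2 : Fin 3), 1) = s(1, 2) := by decide
      rcases all3 s with rfl | rfl | rfl | rfl | rfl | rfl <;> simp only [m0, m1, m2, m3, m4, m5, Sym2.map_mk, t0, t1, t2, r1] <;> omega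
    · refine ⟨Equiv.swap 0 2, fun s => ?_⟩
      have t0 : (Equiv.swap 0 2 : Equiv.Perm (Fin 3)) 0 = 2 := by decide
      have t1 : (Equiv.swap 0 2 : Equiv.Perm (Fin 3)) 1 = 1 := by decide
      have t2 : (Equiv.swap 0 2 : Equiv.Perm (Fin 3)) 2 = 0 := by decide
      have r1 : s((2 : Fin 3), 1) = s(1, 2) := by decide
      have r2 : s((2 : Fin 3), 0) = s(0, 2) := by decide
      have r3 : s((1 : Fin 3), 0) = s(0, 1) := by decide
      rcases all3 s with rfl | rfl | rfl | rfl | rfl | rfl <;> simp only [m0, m1, m2, m3, m4, m5, Sym2.map_mk, t0, t1, t2, r1, r2, r3] <;> omega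
  obtain ⟨τ, hτ⟩ := hτ
  refine ⟨σ.trans τ.symm, fun s => ?_⟩
  rw [← hτ s]
  congr 1
  ext e
  simp only [mem_filter, mem_univ, true_and]
  have : en σ e = Sym2.map τ (en (σ.trans τ.symm) e) := by
    simp [en]
  rw [this]
  exact (Sym2.map.injective τ.injective).eq_iff.symm

theorem iso_refl (G : Multigraph) : IsIso G G := ⟨⟨Equiv.refl _, Equiv.refl _, fun _ => Or.inl ⟨rfl, rfl⟩⟩⟩

theorem iso_symm {G H : Multigraph} (h : IsIso G H) : IsIso H G := by
  obtain ⟨v, e, he⟩ := h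
  refine ⟨⟨v.symm, e.symm, fun x => ?_⟩⟩
  have := he (e.symm x)
  rw [Equiv.apply_symm_apply] at this
  rcases this with ⟨h1, h2⟩ | ⟨h1, h2⟩
  · left; rw [h1, h2]; simp
  · right; rw [h1, h2]; simp

theorem iso_trans {G H K : Multigraph} (h : IsIso G H) (h' : IsIso H K) : IsIso G K := by
  obtain ⟨v, e, he⟩ := h
  obtain ⟨v', e', he'⟩ := h'
  refine ⟨⟨v.trans v', e.trans e', fun x => ?_⟩⟩
  have h1 := he x
  have h2 := he' (e x)
  simp only [Equiv.trans_apply]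
  rcases h1 with ⟨h1, h1'⟩ | ⟨h1, h1'⟩ <;> rw [h1, h1'] at h2 <;> tauto

theorem opt_unique {n : ℕ} (hn : 1 ≤ n) {H : Multigraph} (hH : memG H n (n+2)) (oH : Opt H (n+2))
    (hG : memG (subdivide K4 (wst (n+2))) n (n+2)) (oG : Opt (subdivide K4 (wst (n+2))) (n+2)) :
    IsIso (subdivide K4 (wst (n+2))) H := by
  rcases Nat.lt_or_ge n 4 with h | h
  · have : n = 1 ∨ n = 2 ∨ n = 3 := by omega
    rcases this with rfl | rfl | rfl
    · exact model_iso (model1 hG) (model1 hH)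
    · exact model_iso (model2 hG oG) (model2 hH oH)
    · exact model_iso (model3 hG oG) (model3 hH oH)
  · exact opt_iso h hH oH

/-- for each n ≥ 1 and m = n + 2 there is a uniquely optimal graph in
𝒢_{n,m}; it is a balanced weak subdivision of K₄ satisfying the conditions of
`k4Cond`, and these conditions specify it up to isomorphism. -/
theorem uniquely_optimal_k2 (n m : ℕ) (hn : 1 ≤ n) (hm : m = n + 2) :
    ∃ (G : Multigraph) (w : K4.E → ℕ),
      UniquelyOptimal G n m ∧
      IsWeakSubdivision G K4 w ∧ BalancedWeights w ∧ (∑ e : K4.E, w e) = m ∧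
      k4Cond m w ∧
      (∀ (H : Multigraph) (w' : K4.E → ℕ), memG H n m →
        IsWeakSubdivision H K4 w' → BalancedWeights w' → (∑ e : K4.E, w' e) = m →
        k4Cond m w' → IsIso G H) := by
  subst hm
  have hz := wst_za (n+2) (by omega)
  have hG := sub_memG (wst (n+2)) n hz (wst_sum (n+2))
  have oG := (sub_opt (wst (n+2)) (n+2) (by omega) hz (wst_bal (n+2)) (wst_sum (n+2)) (wst_cond (n+2))).1
  refine ⟨subdivide K4 (wst (n+2)), wst (n+2), ⟨hG, ?_⟩, ⟨hz, iso_refl _⟩, wst_bal _, wst_sum _, wst_cond _, ?_⟩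
  · intro H hH hni p h0 h1
    refine rel_lt hn hG hH oG ?_ p h0 h1
    intro oH
    exact hni (opt_unique hn hH oH hG oG)
  · rintro H w' hH ⟨hz', hiso⟩ hb' hs' hk'
    have hG' := sub_memG w' n hz' hs'
    have oG' := (sub_opt w' (n+2) (by omega) hz' hb' hs' hk').1
    exact iso_trans (opt_unique hn hG' oG' hG oG) (iso_symm hiso)
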